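/- arXiv:1810.08022 — 3 statements merged into one kernel-verified Lean document; each statement's English description precedes it below -/
import Mathlib

section
/- There exists a sequence of polynomials F_m(x,q) ∈ ℚ[x,q] (m ≥ 0) with F_0 = 1 such that for every positive integer n the following identities hold in ℚ[x][q,q⁻¹]: d_{2n,0}(x,q) = (−1)^n · q^{c(2n,0)} · p_{2n,0}(x) · F_n(x+1,q)², and d_{n,1}(x,q) = q^{c(n,1)} · p_{n,1}(x) · F_{⌊(n+1)/2⌋}(x,q) · F_{⌊n/2⌋}(x+2,q). -/
open Polynomial LaurentPolynomial Finset

noncomputable section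

/-- The ring ℚ[x][q,q⁻¹]: Laurent polynomials in `q` over ℚ[x]. -/
abbrev RQ : Type := LaurentPolynomial (Polynomial ℚ)

/-- The polynomial binomial coefficient binom(y, m) = y(y-1)⋯(y-m+1)/m!. -/
noncomputable def binomQ (y : Polynomial ℚ) (m : ℕ) : Polynomial ℚ :=
  Polynomial.C ((m.factorial : ℚ))⁻¹ * ∏ t ∈ Finset.range m, (y - (t : Polynomial ℚ))

/-- a_m(q) ∈ ℚ[x][q,q⁻¹]: a_m = ∑_{l=0}^{m-1}(-q)^l for m > 0, a_0 = 0,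
a_m = -∑_{l=1}^{-m}(-q)^{-l} for m < 0.  Here q = T 1. -/
noncomputable def aQ (m : ℤ) : RQ :=
  if 0 < m then ∑ l ∈ Finset.range m.toNat, (-1 : RQ) ^ l * LaurentPolynomial.T (l : ℤ)
  else -∑ l ∈ Finset.range (-m).toNat, (-1 : RQ) ^ (l + 1) * LaurentPolynomial.T (-(l + 1 : ℤ))

/-- The matrix D_{n,k}(x+c, q) (1-based (i,j) entry binom(x+c+i+j-2, j-1)·a_{j-i+k}(q)). -/
noncomputable def Dmat (n : ℕ) (k c : ℤ) : Matrix (Fin n) (Fin n) RQ :=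
  Matrix.of fun i j =>
    LaurentPolynomial.C
      (binomQ (Polynomial.X + Polynomial.C (c : ℚ) + ((i : ℕ) : Polynomial ℚ)
        + ((j : ℕ) : Polynomial ℚ)) (j : ℕ)) *
    aQ ((j : ℤ) - (i : ℤ) + k)

/-- d_{n,k}(x+c, q) := det D_{n,k}(x+c, q). -/
noncomputable def dd (n : ℕ) (k c : ℤ) : RQ := (Dmat n k c).det

/-- The exponent c(n,k): 0 if k > 0 and n ≤ k; nk if k < 0 and n ≤ -k;
-∑_{i=1}^{n-k}⌊i/2⌋ otherwise. -/
def cExp (n : ℕ) (k : ℤ) : ℤ :=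
  if 0 < k ∧ (n : ℤ) ≤ k then 0
  else if k < 0 ∧ (n : ℤ) ≤ -k then (n : ℤ) * k
  else -((∑ i ∈ Finset.range ((n : ℤ) - k).toNat, ((i + 1) / 2) : ℕ) : ℤ)

/-- p_{n,k}(x) = ∏_{i=1}^{n-1}(⌊i/2⌋!/i!) · ∏_{i=0}^{⌊(n-|k|-1)/2⌋}(x+|k|+2i+1),
the second product (with ⌊(n-|k|+1)/2⌋ factors) being empty if n-|k|-1 < 0. -/
noncomputable def pPoly (n : ℕ) (k : ℤ) : Polynomial ℚ :=
  Polynomial.C (∏ i ∈ Finset.range (n - 1),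
      (((i + 1) / 2).factorial : ℚ) / ((i + 1).factorial : ℚ)) *
  ∏ i ∈ Finset.range ((n - k.natAbs + 1) / 2),
    (Polynomial.X + Polynomial.C ((k.natAbs : ℚ) + 2 * i + 1))

/-- Substituting x ↦ x + c in a bivariate polynomial f(x,q) ∈ (ℚ[x])[q]. -/
noncomputable def shiftX (c : ℚ) (f : Polynomial (Polynomial ℚ)) : Polynomial (Polynomial ℚ) :=
  f.map (Polynomial.aeval (Polynomial.X + Polynomial.C c)).toRingHom

/-!
Multiplying rows and columns of `D_{n,k}` by powers of `-q` turns it into a polynomial matrix, still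
of the same shape, whose corner minors are again of this form up to linear factors in `x`. For
`k = 0`, rescaling rows by `binom(x + i, i)` makes the matrix skew-symmetric, so the determinant
vanishes in odd size and the minors for `k = 1` and `k = -1` agree up to sign. Writing
`E_m(x)`, `O_m(x)` for the polynomial determinants of size `2m` with `k = 0` and of size `2m + 1`
with `k = 1`, the Desnanot–Jacobi identity therefore collapses to
`(2m + 1) E_{m+1}(x-1) E_m(x+1) = x O_m(x)^2`.
Suppose `E_m(x)` is a constant times `∏ (x + 2i + 1)` times `F_m(x+1)^2`. Since
`x ∏ (x + 2i + 2)` is squarefree, unique factorization in `ℚ[x][q]` yields `F_{m+1}` with the same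
property at `m + 1`, and `O_m` is a constant times `∏ (x + 2i + 2)` times `F_{m+1}(x) F_m(x+2)`.
Cancelling `E_m` is legitimate because at `q = 0` it is, up to sign, a product of two nonzero
binomial determinants. The even sizes with `k = 1` follow from the same condensation, in which the
two odd-size minors with `k = 0` now vanish.
-/

section Condensation

open Matrix

variable {R : Type*} [CommRing R]

theorem det_mul_det_adjugate_toBlocks₁₁ {m n : Type*} [Fintype m] [DecidableEq m] [Fintype n]
    [DecidableEq n] (M : Matrix (m ⊕ n) (m ⊕ n) R) :
    M.det * M.adjugate.toBlocks₁₁.det = M.det ^ Fintype.card m * M.toBlocks₂₂.det := by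
  have hmul : M * fromBlocks M.adjugate.toBlocks₁₁ 0 M.adjugate.toBlocks₂₁ 1
      = fromBlocks (M.det • 1) M.toBlocks₁₂ 0 M.toBlocks₂₂ := by
    have hadj := M.mul_adjugate
    rw [← fromBlocks_toBlocks M.adjugate] at hadj
    nth_rewrite 1 [← fromBlocks_toBlocks M] at hadj ⊢
    rw [fromBlocks_multiply, ← fromBlocks_one, fromBlocks_smul, fromBlocks_inj] at hadj
    rw [fromBlocks_multiply, hadj.1, hadj.2.2.1]
    simp
  simpa [det_mul, det_fromBlocks_zero₁₂, det_fromBlocks_zero₂₁] using congrArg det hmul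

theorem det_adjugate_toBlocks₁₁ {m n : Type*} [Fintype m] [DecidableEq m] [Nonempty m]
    [Fintype n] [DecidableEq n] (M : Matrix (m ⊕ n) (m ⊕ n) R) :
    M.adjugate.toBlocks₁₁.det = M.det ^ (Fintype.card m - 1) * M.toBlocks₂₂.det := by
  let G := mvPolynomialX (m ⊕ n) (m ⊕ n) ℤ
  let φ := (MvPolynomial.aeval fun p : (m ⊕ n) × (m ⊕ n) => M p.1 p.2 :
    MvPolynomial ((m ⊕ n) × (m ⊕ n)) ℤ →ₐ[ℤ] R)
  have hG : G.adjugate.toBlocks₁₁.det = G.det ^ (Fintype.card m - 1) * G.toBlocks₂₂.det := by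
    apply mul_left_cancel₀ (det_mvPolynomialX_ne_zero (m ⊕ n) ℤ)
    rw [det_mul_det_adjugate_toBlocks₁₁, ← mul_assoc, mul_pow_sub_one Fintype.card_ne_zero]
  have hM : φ.mapMatrix G = M := mvPolynomialX_mapMatrix_aeval ℤ M
  calc M.adjugate.toBlocks₁₁.det = (φ.mapMatrix G.adjugate.toBlocks₁₁).det := by
        rw [← hM, ← AlgHom.map_adjugate]; rfl
    _ = (φ.mapMatrix G).det ^ (Fintype.card m - 1) * (φ.mapMatrix G.toBlocks₂₂).det := by
        rw [← AlgHom.map_det, hG, map_mul, map_pow, AlgHom.map_det, AlgHom.map_det]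
    _ = M.det ^ (Fintype.card m - 1) * M.toBlocks₂₂.det := by rw [hM, ← hM]; rfl

/-- The equivalence listing the first and the last index of `Fin (n + 2)` before the others, so
that the interior of a matrix becomes a diagonal block. -/
def endsEquiv (n : ℕ) : Fin 2 ⊕ Fin n ≃ Fin (n + 2) :=
  Equiv.ofBijective (Sum.elim ![0, Fin.last (n + 1)] fun i => i.succ.castSucc) <| by
    rw [Fintype.bijective_iff_injective_and_card]
    refine ⟨Function.Injective.sumElim ?_ ?_ ?_, by simp [add_comm]⟩
    · intro a b h
      fin_cases a <;> fin_cases b <;> simp_all [Fin.ext_iff]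
    · exact (Fin.castSucc_injective _).comp (Fin.succ_injective _)
    · intro a i
      fin_cases a
      exacts [(Fin.succ_pos i.castSucc).ne, (Fin.castSucc_lt_last i.succ).ne']

/-- The Desnanot–Jacobi identity. -/
theorem det_mul_det_interior {n : ℕ} (M : Matrix (Fin (n + 2)) (Fin (n + 2)) R) :
    M.det * (M.submatrix (fun i : Fin n => i.succ.castSucc) fun i => i.succ.castSucc).det
      = (M.submatrix Fin.castSucc Fin.castSucc).det * (M.submatrix Fin.succ Fin.succ).det
        - (M.submatrix Fin.succ Fin.castSucc).det * (M.submatrix Fin.castSucc Fin.succ).det := by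
  have hinterior : (M.submatrix (endsEquiv n) (endsEquiv n)).toBlocks₂₂
      = M.submatrix (fun i : Fin n => i.succ.castSucc) fun i => i.succ.castSucc := rfl
  have hfirst : endsEquiv n (Sum.inl 0) = 0 := rfl
  have hlast : endsEquiv n (Sum.inl 1) = Fin.last (n + 1) := rfl
  have hcorners := det_adjugate_toBlocks₁₁ (M.submatrix (endsEquiv n) (endsEquiv n))
  rw [det_submatrix_equiv_self, adjugate_submatrix_equiv_self, Fintype.card_fin, pow_one,
    hinterior] at hcorners
  simp only [← hcorners, det_fin_two, toBlocks₁₁, of_apply, submatrix_apply, hfirst, hlast,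
    adjugate_fin_succ_eq_det_submatrix, Fin.succAbove_zero, Fin.succAbove_last, Fin.val_zero,
    Fin.val_last, add_zero, zero_add, pow_zero, one_mul, Even.neg_one_pow ⟨n + 1, rfl⟩]
  have hsign : (-1 : R) ^ (n + 1) * (-1) ^ (n + 1) = 1 := by simp [← mul_pow]
  linear_combination (-(M.submatrix Fin.succ Fin.castSucc).det *
    (M.submatrix Fin.castSucc Fin.succ).det) * hsign

end Condensation

section Binomial

variable {A : Type*} [CommRing A] [BinomialRing A]

theorem succ_mul_choose_succ (r : A) (j : ℕ) :
    (j + 1 : A) * Ring.choose r (j + 1) = (r - j) * Ring.choose r j := by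
  have h := Ring.choose_smul_choose r (n := j + 1) (k := j) (by omega)
  simpa [nsmul_eq_mul, mul_comm] using h

theorem factorial_mul_choose_eq_prod (r : A) (m : ℕ) :
    (m.factorial : A) * Ring.choose r m = ∏ t ∈ range m, (r - t) := by
  induction m with
  | zero => simp
  | succ m ih =>
    rw [prod_range_succ, ← ih, Nat.factorial_succ, Nat.cast_mul, Nat.cast_add_one]
    linear_combination (m.factorial : A) * succ_mul_choose_succ r m

theorem choose_add_self_mul_choose_comm (x : A) (i j : ℕ) :
    Ring.choose (x + i) i * Ring.choose (x + i + j) j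
      = Ring.choose (x + j) j * Ring.choose (x + j + i) i := by
  rw [mul_comm, mul_comm (Ring.choose (x + j) j), ← Ring.choose_add_smul_choose,
    ← Ring.choose_add_smul_choose, add_comm j i, Nat.choose_symm_add, add_right_comm]

theorem choose_add_self_ne_zero [IsDomain A] {x : A} (hx : ∀ i : ℕ, x + i + 1 ≠ 0) (i : ℕ) :
    Ring.choose (x + i) i ≠ 0 := by
  induction i generalizing x with
  | zero => simp
  | succ i ih =>
    have hprev : Ring.choose (x + 1 + i) i ≠ 0 := ih fun k => by
      have := hx (k + 1)
      push_cast at this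
      ring_nf at this ⊢
      exact this
    have hfirst : x + 1 ≠ 0 := by simpa using hx 0
    have h := succ_mul_choose_succ (x + 1 + i) i
    rw [add_sub_cancel_right] at h
    rw [Nat.cast_add_one, ← add_assoc, add_right_comm]
    exact right_ne_zero_of_mul (h ▸ mul_ne_zero hfirst hprev)

theorem factorial_mul_det_choose_succ (x : A) (n : ℕ) (g : Matrix (Fin n) (Fin n) A) :
    (n.factorial : A) *
        (Matrix.of fun i j : Fin n => Ring.choose (x + i + (j + 1)) (j + 1) * g i j).det
      = (∏ i ∈ range n, (x + i + 1)) *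
        (Matrix.of fun i j : Fin n => Ring.choose (x + 1 + i + j) j * g i j).det := by
  have hfact : (n.factorial : A) = ∏ j : Fin n, ((j : ℕ) + 1 : A) := by
    rw [← prod_range_add_one_eq_factorial, prod_range]
    push_cast
    rfl
  rw [hfact, prod_range, ← Matrix.det_mul_row, ← Matrix.det_mul_column]
  congr 1
  ext i j
  have h := succ_mul_choose_succ (x + i + (j + 1)) j
  rw [show x + i + (j + 1) - (j : ℕ) = x + i + 1 by ring,
    show x + i + ((j : ℕ) + 1 : A) = x + 1 + i + j by ring] at h
  simp only [Matrix.of_apply]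
  rw [show x + i + ((j : ℕ) + 1 : A) = x + 1 + i + j by ring, ← mul_assoc, h, mul_assoc]

end Binomial

section GeomDiff

variable {A B : Type*} [CommRing A] [CommRing B]

/-- The signed geometric sum from `r` to `s`, which equals `(u ^ r - u ^ s) / (1 - u)` whenever
the quotient makes sense. At `u = -q` it is `u ^ r * a_{s - r}(q)`. -/
def geomDiff (u : A) (r s : ℕ) : A :=
  ∑ l ∈ range s, u ^ l - ∑ l ∈ range r, u ^ l

theorem map_geomDiff (φ : A →+* B) (u : A) (r s : ℕ) :
    φ (geomDiff u r s) = geomDiff (φ u) r s := by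
  simp [geomDiff]

theorem geomDiff_swap (u : A) (r s : ℕ) : geomDiff u s r = -geomDiff u r s :=
  (neg_sub _ _).symm

theorem geomDiff_zero (r s : ℕ) :
    geomDiff (0 : A) r s = (if s = 0 then 0 else 1) - if r = 0 then 0 else 1 := by
  simp [geomDiff, zero_geom_sum]

theorem geomDiff_add_right (u : A) (r d : ℕ) :
    geomDiff u r (r + d) = u ^ r * ∑ l ∈ range d, u ^ l := by
  simp [geomDiff, sum_range_add, pow_add, mul_sum]

theorem toLaurent_neg_X_pow (l : ℕ) : toLaurent (-X : ℚ[X][X]) ^ l = (-1) ^ l * T l := by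
  rw [show (-X : ℚ[X][X]) = -1 * X by ring, map_mul, map_neg, map_one, mul_pow, ← map_pow,
    toLaurent_X_pow]

theorem toLaurent_neg_X_pow_mul_inv (l : ℕ) :
    toLaurent (-X : ℚ[X][X]) ^ l * ((-1) ^ l * T (-l : ℤ)) = 1 := by
  rw [toLaurent_neg_X_pow, mul_mul_mul_comm, ← mul_pow, ← T_add, add_neg_cancel, T_zero,
    show (-1 * -1 : RQ) = 1 by ring, one_pow, mul_one]

theorem toLaurent_neg_X_pow_mul_aQ (r s : ℕ) :
    toLaurent (-X : ℚ[X][X]) ^ r * aQ (s - r) = toLaurent (geomDiff (-X) r s) := by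
  rw [map_geomDiff]
  rcases lt_or_ge r s with h | h
  · obtain ⟨d, rfl⟩ := Nat.exists_eq_add_of_le h.le
    rw [geomDiff_add_right, aQ, if_pos (by omega), Nat.cast_add, add_sub_cancel_left,
      Int.toNat_natCast]
    simp only [toLaurent_neg_X_pow]
  · obtain ⟨d, rfl⟩ := Nat.exists_eq_add_of_le h
    rw [geomDiff_swap, geomDiff_add_right, aQ, if_neg (by omega), Nat.cast_add,
      show (-(s - (s + d : ℤ))).toNat = d by omega, ← sum_range_reflect]
    suffices hsum : toLaurent (-X : ℚ[X][X]) ^ (s + d) * ∑ l ∈ range d, (-1) ^ (d - 1 - l + 1) *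
        T (-((d - 1 - l : ℕ) + 1 : ℤ)) = toLaurent (-X) ^ s * ∑ l ∈ range d, toLaurent (-X) ^ l by
      linear_combination -hsum
    rw [mul_sum, mul_sum]
    refine sum_congr rfl fun l hl => ?_
    have hl := mem_range.mp hl
    rw [show s + d = s + l + (d - 1 - l + 1) by omega, pow_add, mul_assoc, ← Nat.cast_add_one,
      toLaurent_neg_X_pow_mul_inv, mul_one, pow_add]

end GeomDiff

section ClearedDet

variable {A B : Type*} [CommRing A] [BinomialRing A] [CommRing B] [BinomialRing B]

/-- The matrix `D_{n,a-b}(x,q)` at `q = -u`, with row `i` multiplied by `u ^ (i + 1 - a)` and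
column `j` by `u ^ (b - (j + 1))` (truncated subtractions, indices from `0`), which clears all
negative powers of `u`. -/
def clearedMatrix (u x : A) (n a b : ℕ) : Matrix (Fin n) (Fin n) A :=
  Matrix.of fun i j => Ring.choose (x + i + j) j *
    geomDiff u ((i + 1 - a) + (b - (j + 1))) ((a - (i + 1)) + (j + 1 - b))

/-- The determinant of `clearedMatrix`. -/
def clearedDet (u x : A) (n a b : ℕ) : A :=
  (clearedMatrix u x n a b).det

theorem map_clearedMatrix (φ : A →+* B) (u x : A) (n a b : ℕ) :
    φ.mapMatrix (clearedMatrix u x n a b) = clearedMatrix (φ u) (φ x) n a b := by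
  ext i j
  simp [clearedMatrix, Ring.map_choose, map_geomDiff]

theorem map_clearedDet (φ : A →+* B) (u x : A) (n a b : ℕ) :
    φ (clearedDet u x n a b) = clearedDet (φ u) (φ x) n a b := by
  rw [clearedDet, RingHom.map_det, map_clearedMatrix, clearedDet]

theorem clearedMatrix_succ_castSucc (u x : A) (n a b : ℕ) :
    (clearedMatrix u x (n + 1) (a + 1) b).submatrix Fin.succ Fin.castSucc =
      clearedMatrix u (x + 1) n a b := by
  ext i j
  simp only [clearedMatrix, Matrix.submatrix_apply, Matrix.of_apply, Fin.val_succ,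
    Fin.val_castSucc, Nat.add_sub_add_right, Nat.cast_add_one, ← add_assoc, add_right_comm x]

theorem factorial_mul_det_clearedMatrix_castSucc_succ (u x : A) (n a b : ℕ) :
    (n.factorial : A) *
        ((clearedMatrix u x (n + 1) a (b + 1)).submatrix Fin.castSucc Fin.succ).det =
      (∏ i ∈ range n, (x + i + 1)) * clearedDet u (x + 1) n a b := by
  let g : Matrix (Fin n) (Fin n) A := Matrix.of fun i j =>
    geomDiff u ((i + 1 - a) + (b - (j + 1))) ((a - (i + 1)) + (j + 1 - b))
  convert factorial_mul_det_choose_succ x n g using 3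
  · ext i j
    simp only [clearedMatrix, g, Matrix.submatrix_apply, Matrix.of_apply, Fin.val_succ,
      Fin.val_castSucc, Nat.add_sub_add_right, Nat.cast_add_one]
  · rfl

variable [IsDomain A] {x : A}

theorem clearedDet_swap (u : A) (hx : ∀ i : ℕ, x + i + 1 ≠ 0) (n a b : ℕ) :
    clearedDet u x n b a = (-1) ^ n * clearedDet u x n a b := by
  let w (i : Fin n) : A := Ring.choose (x + (i : ℕ)) i
  have hw : ∏ i, w i ≠ 0 := prod_ne_zero_iff.mpr fun i _ => choose_add_self_ne_zero hx i
  have hskew : (Matrix.of fun i j => w i * clearedMatrix u x n b a i j) =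
      -(Matrix.of fun i j => w i * clearedMatrix u x n a b i j).transpose := by
    ext i j
    simp only [clearedMatrix, w, Matrix.of_apply, Matrix.neg_apply, Matrix.transpose_apply]
    rw [geomDiff_swap, add_comm (b - _), add_comm (_ - b), ← mul_assoc, ← mul_assoc,
      choose_add_self_mul_choose_comm, mul_neg]
  apply mul_left_cancel₀ hw
  rw [clearedDet, ← Matrix.det_mul_column, hskew, Matrix.det_neg, Matrix.det_transpose,
    Matrix.det_mul_column, Fintype.card_fin, mul_left_comm, clearedDet]

theorem clearedDet_self_of_odd (u : A) (hx : ∀ i : ℕ, x + i + 1 ≠ 0) {n : ℕ} (hn : Odd n)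
    (a : ℕ) : clearedDet u x n a a = 0 := by
  have := BinomialRing.toIsAddTorsionFree (R := A)
  apply self_eq_neg.mp
  simpa [hn.neg_one_pow] using clearedDet_swap u hx n a a

theorem clearedDet_condensation (u : A) (hx : ∀ i : ℕ, x + i + 1 ≠ 0) (n a b : ℕ) :
    (n + 1) * (clearedDet u x (n + 2) (a + 1) (b + 1) * clearedDet u (x + 2) n a b) =
      (x + n + 2) * (clearedDet u x (n + 1) (a + 1) (b + 1) * clearedDet u (x + 2) (n + 1) a b) -
      (x + 1) *
        (clearedDet u (x + 1) (n + 1) a (b + 1) * clearedDet u (x + 1) (n + 1) (a + 1) b) := by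
  let minor (y : A) (k a : ℕ) : A :=
    ((clearedMatrix u y (k + 1) a (b + 1)).submatrix Fin.castSucc Fin.succ).det
  have hjacobi : clearedDet u x (n + 2) (a + 1) (b + 1) * minor (x + 1) n a =
      clearedDet u x (n + 1) (a + 1) (b + 1) * minor (x + 1) (n + 1) a -
      clearedDet u (x + 1) (n + 1) a (b + 1) * minor x (n + 1) (a + 1) := by
    simp only [minor, clearedDet, ← clearedMatrix_succ_castSucc]
    exact det_mul_det_interior (clearedMatrix u x (n + 2) (a + 1) (b + 1))
  have hinterior : n.factorial * minor (x + 1) n a = _ :=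
    factorial_mul_det_clearedMatrix_castSucc_succ u (x + 1) n a b
  have hlower : (n + 1).factorial * minor (x + 1) (n + 1) a = _ :=
    factorial_mul_det_clearedMatrix_castSucc_succ u (x + 1) (n + 1) a b
  have hupper : (n + 1).factorial * minor x (n + 1) (a + 1) = _ :=
    factorial_mul_det_clearedMatrix_castSucc_succ u x (n + 1) (a + 1) b
  rw [prod_range_succ, Nat.factorial_succ] at hlower
  rw [prod_range_succ', Nat.factorial_succ] at hupper
  simp only [Nat.cast_add_one, Nat.cast_mul, Nat.cast_zero, add_zero,
    fun i : ℕ => show x + (i + 1 : A) + 1 = x + 1 + i + 1 by ring] at hlower hupper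
  rw [show x + 2 = x + 1 + 1 by ring]
  have hprod : ∏ i ∈ range n, (x + 1 + i + 1) ≠ 0 := prod_ne_zero_iff.mpr fun i _ => by
    convert hx (i + 1) using 1
    push_cast
    ring
  apply mul_left_cancel₀ hprod
  linear_combination (n + 1 : A) * n.factorial * hjacobi -
    (n + 1 : A) * clearedDet u x (n + 2) (a + 1) (b + 1) * hinterior +
    clearedDet u x (n + 1) (a + 1) (b + 1) * hlower -
    clearedDet u (x + 1) (n + 1) a (b + 1) * hupper

theorem clearedDet_condensation_self (u : A) (hx : ∀ i : ℕ, x + i + 1 ≠ 0) {n : ℕ} (hn : Even n)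
    (a : ℕ) :
    (n + 1) * (clearedDet u x (n + 2) (a + 1) (a + 1) * clearedDet u (x + 2) n a a) =
      (x + 1) * clearedDet u (x + 1) (n + 1) (a + 1) a ^ 2 := by
  have hx' (i : ℕ) : x + 1 + i + 1 ≠ 0 := by
    simpa only [Nat.cast_add_one, add_assoc, add_comm (1 : A)] using hx (i + 1)
  have hswap := clearedDet_swap u hx' (n + 1) (a + 1) a
  rw [hn.add_one.neg_one_pow] at hswap
  rw [clearedDet_condensation u hx, clearedDet_self_of_odd u hx hn.add_one, hswap]
  ring

theorem clearedDet_condensation_succ (u : A) (hx : ∀ i : ℕ, x + i + 1 ≠ 0) {n : ℕ} (hn : Even n)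
    (a : ℕ) :
    (n + 1) * (clearedDet u x (n + 2) (a + 2) (a + 1) * clearedDet u (x + 2) n (a + 1) a) =
      (x + n + 2) *
        (clearedDet u x (n + 1) (a + 2) (a + 1) * clearedDet u (x + 2) (n + 1) (a + 1) a) := by
  have hx' (i : ℕ) : x + 1 + i + 1 ≠ 0 := by
    simpa only [Nat.cast_add_one, add_assoc, add_comm (1 : A)] using hx (i + 1)
  rw [clearedDet_condensation u hx, clearedDet_self_of_odd u hx' hn.add_one, zero_mul, mul_zero,
    sub_zero]

end ClearedDet

theorem det_fromBlocks_zero₂₂ {R m : Type*} [CommRing R] [Fintype m] [DecidableEq m]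
    (A B C : Matrix m m R) :
    (Matrix.fromBlocks A B C 0).det =
      ((Equiv.Perm.sign (Equiv.sumComm m m) : ℤ) : R) * (B.det * C.det) := by
  rw [← Matrix.det_fromBlocks_zero₂₁ B A C, ← Matrix.det_permute']
  congr 1
  exact (Matrix.fromBlocks_submatrix_sum_swap_right B A 0 C id).symm

section Nonvanishing

variable {A : Type*} [CommRing A] [IsDomain A] [BinomialRing A]

theorem det_choose_add_ne_zero {m : ℕ} {v : Fin m → A} (hv : Function.Injective v) :
    (Matrix.of fun s t : Fin m => Ring.choose (v s + (t : ℕ)) t).det ≠ 0 := by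
  have hfact : (∏ t : Fin m, ((t : ℕ).factorial : A)) *
      (Matrix.of fun s t : Fin m => Ring.choose (v s + (t : ℕ)) t).det =
      (Matrix.vandermonde fun s => v s + 1).det := by
    rw [← Matrix.det_mul_row, Matrix.det_eval_matrixOfPolynomials_eq_det_vandermonde
      (fun s => v s + 1) (fun t => ascPochhammer A t) (fun t => ascPochhammer_natDegree _ _)
      (fun t => monic_ascPochhammer _ _)]
    congr 1
    ext s t
    simp only [Matrix.of_apply, Ring.choose, add_sub_cancel_right]
    rw [← nsmul_eq_mul, Ring.factorial_nsmul_multichoose_eq_ascPochhammer,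
      ascPochhammer_smeval_eq_eval]
  have hvandermonde : (Matrix.vandermonde fun s => v s + 1).det ≠ 0 :=
    Matrix.det_vandermonde_ne_zero_iff.mpr ((add_left_injective 1).comp hv)
  exact right_ne_zero_of_mul (hfact ▸ hvandermonde)

theorem det_choose_add_right_ne_zero {x : A} (hx : ∀ i : ℕ, x + i + 1 ≠ 0) (m k : ℕ) :
    (Matrix.of fun s t : Fin m => Ring.choose (x + (s : ℕ) + (k + t : ℕ)) (k + t)).det ≠ 0 := by
  have := BinomialRing.toIsAddTorsionFree (R := A)
  have := CharZero.of_isAddTorsionFree A A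
  let lower : Matrix (Fin m) (Fin m) A :=
    Matrix.of fun t s => Ring.choose (x + (k + t : ℕ) + (s : ℕ)) s
  have hlower : lower.det ≠ 0 :=
    det_choose_add_ne_zero fun s t h => by simpa [Fin.ext_iff] using h
  have hsymm : (Matrix.of fun s t : Fin m => Ring.choose (x + (s : ℕ)) s *
      Matrix.of (fun s t : Fin m => Ring.choose (x + (s : ℕ) + (k + t : ℕ)) (k + t)) s t) =
      Matrix.of fun s t : Fin m =>
        Ring.choose (x + (k + t : ℕ)) (k + t) * lower.transpose s t := by
    ext s t
    exact choose_add_self_mul_choose_comm x s (k + t)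
  have hdet := congrArg Matrix.det hsymm
  rw [Matrix.det_mul_column, Matrix.det_mul_row, Matrix.det_transpose] at hdet
  refine right_ne_zero_of_mul (hdet.trans_ne (mul_ne_zero ?_ hlower))
  exact prod_ne_zero_iff.mpr fun t _ => choose_add_self_ne_zero hx (k + t)

theorem clearedDet_zero_ne_zero {x : A} (hx : ∀ i : ℕ, x + i + 1 ≠ 0) (m : ℕ) :
    clearedDet 0 x (m + m) m m ≠ 0 := by
  have := BinomialRing.toIsAddTorsionFree (R := A)
  have := CharZero.of_isAddTorsionFree A A
  let N := clearedMatrix 0 x (m + m) m m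
  let e : Fin m ⊕ Fin m ≃ Fin (m + m) := finSumFinEquiv
  let upper : Matrix (Fin m) (Fin m) A :=
    Matrix.of fun s t => Ring.choose (x + (s : ℕ) + (m + t : ℕ)) (m + t)
  let lower : Matrix (Fin m) (Fin m) A :=
    Matrix.of fun s t => Ring.choose (x + (m + s : ℕ) + (t : ℕ)) t
  have hblocks : N.submatrix e e =
      Matrix.fromBlocks (N.submatrix e e).toBlocks₁₁ upper (-lower) 0 := by
    ext (s | s) (t | t)
    · rfl
    all_goals
      simp only [N, e, upper, lower, clearedMatrix, Matrix.submatrix_apply, Matrix.of_apply,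
        Matrix.fromBlocks_apply₁₂, Matrix.fromBlocks_apply₂₁, Matrix.fromBlocks_apply₂₂,
        finSumFinEquiv_apply_left, finSumFinEquiv_apply_right, Fin.val_castAdd, Fin.val_natAdd,
        geomDiff_zero, Matrix.neg_apply, Matrix.zero_apply]
    · rw [if_neg (by omega), if_pos (by omega), sub_zero, mul_one]
    · rw [if_pos (by omega), if_neg (by omega), zero_sub, mul_neg_one]
    · rw [if_neg (by omega), if_neg (by omega), sub_self, mul_zero]
  have hlower : lower.det ≠ 0 :=
    det_choose_add_ne_zero fun s t h => by simpa [Fin.ext_iff] using h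
  rw [clearedDet, ← Matrix.det_submatrix_equiv_self e, hblocks, det_fromBlocks_zero₂₂,
    Matrix.det_neg]
  refine mul_ne_zero ?_
    (mul_ne_zero (det_choose_add_right_ne_zero hx m m) (mul_ne_zero ?_ hlower)) <;> simp

end Nonvanishing

section Specialization

/-- The determinant of `D_{n,a-b}(x+c,q)` with its rows and columns rescaled as in
`clearedMatrix`, as a polynomial in `q` over `ℚ[x]`. -/
def polyDet (c : ℚ) (n a b : ℕ) : ℚ[X][X] :=
  clearedDet (-X) (Polynomial.C (X + Polynomial.C c)) n a b

theorem X_add_C_add_natCast_add_one_ne_zero (c : ℚ) (i : ℕ) :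
    X + Polynomial.C c + (i : ℚ[X]) + 1 ≠ 0 := by
  rw [show X + Polynomial.C c + (i : ℚ[X]) + 1 = X + Polynomial.C (c + i + 1) by simp [add_assoc]]
  exact Polynomial.X_add_C_ne_zero _

theorem C_X_add_C_add_natCast_add_one_ne_zero (c : ℚ) (i : ℕ) :
    (Polynomial.C (X + Polynomial.C c) : ℚ[X][X]) + i + 1 ≠ 0 := by
  have h := Polynomial.C_ne_zero.mpr (X_add_C_add_natCast_add_one_ne_zero c i)
  simpa only [map_add, map_natCast, map_one] using h

theorem shiftX_mul (c : ℚ) (f g : ℚ[X][X]) : shiftX c (f * g) = shiftX c f * shiftX c g :=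
  Polynomial.map_mul _

theorem shiftX_pow (c : ℚ) (f : ℚ[X][X]) (n : ℕ) : shiftX c (f ^ n) = shiftX c f ^ n :=
  Polynomial.map_pow _ n

theorem shiftX_C (c : ℚ) (p : ℚ[X]) :
    shiftX c (Polynomial.C p) = Polynomial.C (p.comp (X + Polynomial.C c)) :=
  Polynomial.map_C _

theorem shiftX_injective (c : ℚ) : Function.Injective (shiftX c) :=
  Polynomial.map_injective _ (Polynomial.algEquivAevalXAddC c).injective

theorem shiftX_ne_zero (c : ℚ) {f : ℚ[X][X]} (hf : f ≠ 0) : shiftX c f ≠ 0 := fun h =>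
  hf (shiftX_injective c (h.trans (Polynomial.map_zero _).symm))

theorem shiftX_shiftX (c d : ℚ) (f : ℚ[X][X]) : shiftX c (shiftX d f) = shiftX (c + d) f := by
  rw [shiftX, shiftX, Polynomial.map_map]
  refine congrArg (f.map ·) (RingHom.ext fun p => ?_)
  change (p.comp _).comp _ = p.comp _
  rw [Polynomial.comp_assoc]
  simp [add_assoc]

theorem shiftX_polyDet (c d : ℚ) (n a b : ℕ) :
    shiftX d (polyDet c n a b) = polyDet (c + d) n a b := by
  let φ : ℚ[X][X] →+* ℚ[X][X] :=
    Polynomial.mapRingHom (Polynomial.aeval (X + Polynomial.C d)).toRingHom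
  have hX : φ (-X) = -X := by rw [map_neg]; exact congrArg _ (Polynomial.map_X _)
  have hC : φ (Polynomial.C (X + Polynomial.C c)) = Polynomial.C (X + Polynomial.C (c + d)) := by
    refine (shiftX_C d _).trans (congrArg _ ?_)
    simp only [Polynomial.add_comp, Polynomial.X_comp, Polynomial.C_comp, map_add]
    ring
  change φ (clearedDet _ _ n a b) = _
  rw [map_clearedDet, hX, hC, polyDet]

theorem polyDet_two_mul_ne_zero (c : ℚ) (m : ℕ) : polyDet c (2 * m) m m ≠ 0 := by
  intro h
  have heval := congrArg (Polynomial.evalRingHom 0) h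
  rw [polyDet, map_clearedDet, map_zero, map_neg, Polynomial.coe_evalRingHom, Polynomial.eval_X,
    neg_zero, Polynomial.eval_C, two_mul] at heval
  exact clearedDet_zero_ne_zero (X_add_C_add_natCast_add_one_ne_zero c) m heval

theorem binomQ_eq_choose (y : ℚ[X]) (m : ℕ) : binomQ y m = Ring.choose y m := by
  rw [binomQ, ← factorial_mul_choose_eq_prod, ← map_natCast Polynomial.C, ← mul_assoc, ← map_mul,
    inv_mul_cancel₀ (Nat.cast_ne_zero.mpr m.factorial_ne_zero), map_one, one_mul]

theorem toLaurent_clearedMatrix_apply (n a b : ℕ) (i j : Fin n) :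
    toLaurent (clearedMatrix (-X : ℚ[X][X]) (Polynomial.C (X + Polynomial.C 0)) n a b i j) =
      toLaurent (-X) ^ (i + 1 - a : ℕ) *
        (toLaurent (-X) ^ (b - (j + 1) : ℕ) * Dmat n (a - b) 0 i j) := by
  have hC : (Polynomial.C (X + Polynomial.C 0) : ℚ[X][X]) + ((i : ℕ) : ℚ[X][X]) +
        ((j : ℕ) : ℚ[X][X]) =
      Polynomial.C (X + Polynomial.C 0 + ((i : ℕ) : ℚ[X]) + ((j : ℕ) : ℚ[X])) := by
    simp only [map_add, map_natCast]
  rw [clearedMatrix, Dmat, Matrix.of_apply, Matrix.of_apply, binomQ_eq_choose, map_mul,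
    ← toLaurent_neg_X_pow_mul_aQ, hC, ← Ring.map_choose, Polynomial.toLaurent_C, pow_add,
    Int.cast_zero, mul_left_comm (LaurentPolynomial.C _), mul_assoc]
  congr 4
  omega

theorem toLaurent_polyDet (n a b : ℕ) : toLaurent (polyDet 0 n a b) =
    toLaurent (-X) ^ (∑ i ∈ range n, (i + 1 - a + (b - (i + 1)))) * dd n (a - b) 0 := by
  rw [polyDet, clearedDet, RingHom.map_det, sum_range, sum_add_distrib, pow_add, dd,
    ← prod_pow_eq_pow_sum, ← prod_pow_eq_pow_sum, mul_assoc, ← Matrix.det_mul_row,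
    ← Matrix.det_mul_column]
  congr 1
  ext1 i j
  exact toLaurent_clearedMatrix_apply n a b i j

theorem sum_range_tsub_add_tsub (n a : ℕ) {b : ℕ} (hb : b ≤ n) :
    ∑ i ∈ range n, (i + 1 - a + (b - (i + 1))) =
      ∑ i ∈ range (n + 1 - a), i + ∑ i ∈ range b, i := by
  rw [sum_add_distrib]
  congr 1
  · clear hb
    induction n with
    | zero => cases a <;> simp
    | succ n ih =>
      rw [sum_range_succ, ih]
      rcases le_or_gt a (n + 1) with h | h
      · rw [Nat.succ_sub h, sum_range_succ]
      · rw [Nat.sub_eq_zero_of_le h.le, Nat.sub_eq_zero_of_le h, add_zero]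
  · obtain ⟨d, rfl⟩ := Nat.exists_eq_add_of_le hb
    have htail : ∑ i ∈ range d, (b - (b + i + 1)) = 0 := sum_eq_zero fun i _ => by omega
    rw [sum_range_add, htail, add_zero, ← sum_range_reflect]
    refine sum_congr rfl fun i hi => ?_
    have := mem_range.mp hi
    omega

theorem dd_eq_toLaurent_polyDet (n a : ℕ) {b s : ℕ} (hb : b ≤ n)
    (hs : ∑ i ∈ range (n + 1 - a), i + ∑ i ∈ range b, i = s) :
    dd n (a - b) 0 = (-1) ^ s * T (-s) * toLaurent (polyDet 0 n a b) := by
  rw [toLaurent_polyDet, sum_range_tsub_add_tsub n a hb, hs]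
  linear_combination -dd n (a - b) 0 * toLaurent_neg_X_pow_mul_inv s

theorem sum_range_succ_id_add_sum_range_id (m : ℕ) :
    ∑ i ∈ range (m + 1), i + ∑ i ∈ range m, i = m ^ 2 := by
  rw [sum_range_succ, add_right_comm, ← mul_two, sum_range_id_mul_two, sq, ← Nat.mul_succ]
  cases m <;> simp

theorem polyDet_two_mul_add_one_succ_succ (c : ℚ) (m : ℕ) :
    polyDet c (2 * m + 1) (m + 2) (m + 1) = polyDet c (2 * m + 1) (m + 1) m := by
  suffices h : polyDet 0 (2 * m + 1) (m + 2) (m + 1) = polyDet 0 (2 * m + 1) (m + 1) m by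
    simpa only [shiftX_polyDet, zero_add] using congrArg (shiftX c) h
  apply Polynomial.toLaurent_injective
  rw [toLaurent_polyDet, toLaurent_polyDet, sum_range_tsub_add_tsub _ _ (by omega),
    sum_range_tsub_add_tsub _ _ (by omega), add_comm,
    show 2 * m + 1 + 1 - (m + 2) = m by omega, show 2 * m + 1 + 1 - (m + 1) = m + 1 by omega,
    show ((m + 2 : ℕ) - (m + 1 : ℕ) : ℤ) = (m + 1 : ℕ) - m by omega]

theorem C_X_add_C_add (c d : ℚ) : (Polynomial.C (X + Polynomial.C (c + d)) : ℚ[X][X]) =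
    Polynomial.C (X + Polynomial.C c) + Polynomial.C (Polynomial.C d) := by
  rw [← map_add, add_assoc, ← map_add]

theorem two_mul_add_one_mul_polyDet_self (c : ℚ) (m : ℕ) :
    (2 * (m : ℚ[X][X]) + 1) *
        (polyDet c (2 * (m + 1)) (m + 1) (m + 1) * polyDet (c + 2) (2 * m) m m) =
      Polynomial.C (X + Polynomial.C (c + 1)) * polyDet (c + 1) (2 * m + 1) (m + 1) m ^ 2 := by
  have h := clearedDet_condensation_self (-X) (C_X_add_C_add_natCast_add_one_ne_zero c)
    (even_two_mul m) m
  rw [mul_add_one]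
  simpa only [polyDet, C_X_add_C_add, map_ofNat, map_one, Nat.cast_mul, Nat.cast_ofNat] using h

theorem two_mul_add_one_mul_polyDet_succ (c : ℚ) (m : ℕ) :
    (2 * (m : ℚ[X][X]) + 1) *
        (polyDet c (2 * (m + 1)) (m + 2) (m + 1) * polyDet (c + 2) (2 * m) (m + 1) m) =
      Polynomial.C (X + Polynomial.C (c + 2 * m + 2)) *
        (polyDet c (2 * m + 1) (m + 1) m * polyDet (c + 2) (2 * m + 1) (m + 1) m) := by
  have h := clearedDet_condensation_succ (-X) (C_X_add_C_add_natCast_add_one_ne_zero c)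
    (even_two_mul m) m
  rw [mul_add_one, ← polyDet_two_mul_add_one_succ_succ c]
  simpa only [polyDet, C_X_add_C_add, map_ofNat, map_mul, map_natCast, Nat.cast_mul,
    Nat.cast_ofNat] using h

end Specialization

section Factorization

/-- The product `∏_{i<m} (x + c + 2i + 1)`. -/
def linProd (m : ℕ) (c : ℚ) : ℚ[X] :=
  ∏ i ∈ range m, (X + Polynomial.C (c + 2 * i + 1))

theorem linProd_succ (m : ℕ) (c : ℚ) :
    linProd (m + 1) c = linProd m c * (X + Polynomial.C (c + 2 * m + 1)) :=
  prod_range_succ _ m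

theorem linProd_succ_neg_one (m : ℕ) : linProd (m + 1) (-1) = X * linProd m 1 := by
  rw [linProd, prod_range_succ', mul_comm, linProd]
  congr 1
  · simp
  · refine prod_congr rfl fun i _ => ?_
    congr 2
    push_cast
    ring

theorem linProd_ne_zero (m : ℕ) (c : ℚ) : linProd m c ≠ 0 :=
  prod_ne_zero_iff.mpr fun _ _ => Polynomial.X_add_C_ne_zero _

theorem linProd_comp (m : ℕ) (c d : ℚ) :
    (linProd m c).comp (X + Polynomial.C d) = linProd m (c + d) := by
  rw [linProd, linProd, Polynomial.prod_comp]
  refine prod_congr rfl fun i _ => ?_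
  simp
  ring

theorem squarefree_C_linProd (m : ℕ) (c : ℚ) :
    Squarefree (Polynomial.C (linProd m c) : ℚ[X][X]) := by
  have e (a : ℚ) : (X + Polynomial.C a) = X - Polynomial.C (-a) := by simp
  rw [linProd, map_prod]
  refine squarefree_prod_of_pairwise_isCoprime (fun i _ j _ hij => ?_) fun i _ => ?_
  · refine (IsCoprime.map ?_ Polynomial.C).isRelPrime
    rw [e, e]
    refine Polynomial.isCoprime_X_sub_C_of_isUnit_sub (Ne.isUnit fun h => hij ?_)
    have : (i : ℚ) = j := by linarith
    exact_mod_cast this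
  · refine (Polynomial.prime_C_iff.mpr ?_).squarefree
    rw [e]
    exact Polynomial.prime_X_sub_C _

/-- The product `∏_{i=1}^{m} ⌊i/2⌋! / i!`. -/
def factProd (m : ℕ) : ℚ :=
  ∏ i ∈ range m, (((i + 1) / 2).factorial : ℚ) / ((i + 1).factorial : ℚ)

theorem factProd_ne_zero (m : ℕ) : factProd m ≠ 0 :=
  prod_ne_zero_iff.mpr fun _ _ => by positivity

theorem factProd_two_mul_sq (m : ℕ) :
    factProd (2 * m) ^ 2 = factProd (2 * m + 1) * factProd (2 * m - 1) * (2 * m + 1) := by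
  cases m with
  | zero => simp [factProd]
  | succ k =>
    have h1 : factProd (2 * (k + 1)) =
        factProd (2 * k + 1) * ((k + 1).factorial / (2 * k + 2).factorial) := by
      rw [mul_add_one, factProd, prod_range_succ, show (2 * k + 1 + 1) / 2 = k + 1 by omega]
      rfl
    have h2 : factProd (2 * (k + 1) + 1) =
        factProd (2 * (k + 1)) * ((k + 1).factorial / ((2 * k + 3) * (2 * k + 2).factorial)) := by
      rw [factProd, prod_range_succ, show (2 * (k + 1) + 1) / 2 = k + 1 by omega,
        Nat.factorial_succ (2 * (k + 1))]
      push_cast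
      rw [show (2 * (k + 1 : ℚ) + 1) = 2 * k + 3 by ring]
      rfl
    rw [show 2 * (k + 1) - 1 = 2 * k + 1 by omega, h2, h1]
    have := Nat.cast_ne_zero (R := ℚ).mpr (Nat.factorial_ne_zero (2 * k + 2))
    have h3 : (2 * k + 3 : ℚ) ≠ 0 := by positivity
    push_cast
    field_simp
    ring

theorem neg_one_pow_mul_factProd_sq (m : ℕ) : ((-1) ^ m * factProd (2 * m)) ^ 2 =
    factProd (2 * m + 1) * factProd (2 * m - 1) * (2 * m + 1) := by
  rw [mul_pow, ← pow_mul, (even_two.mul_left m).neg_one_pow, one_mul, factProd_two_mul_sq]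

theorem exists_factor_of_mul_sq_eq {R : Type*} [CommRing R] [IsDomain R]
    [UniqueFactorizationMonoid R] {x P E G f : R} (hxP : Squarefree (x * P)) (hf : f ≠ 0)
    (h : E * (P * f ^ 2) = x * G ^ 2) : ∃ u, G = P * u * f ∧ E = x * P * u ^ 2 := by
  have hxP0 := hxP.ne_zero
  have hx : x ≠ 0 := left_ne_zero_of_mul hxP0
  obtain ⟨H, hH⟩ : f ∣ x * G := by
    have : f ^ 2 ∣ (x * G) ^ 2 := ⟨E * (x * P), by linear_combination (-x) * h⟩
    exact (IsIntegrallyClosed.pow_dvd_pow_iff two_ne_zero).mp this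
  have hE : E * (x * P) = H ^ 2 := mul_right_cancel₀ (pow_ne_zero 2 hf)
    (by linear_combination x * h + (x * G + f * H) * hH)
  obtain ⟨u, rfl⟩ := (hxP.dvd_pow_iff_dvd two_ne_zero).mp (Dvd.intro_left _ hE)
  exact ⟨u, mul_left_cancel₀ hx (by linear_combination hH),
    mul_right_cancel₀ hxP0 (by linear_combination hE)⟩

/-- `f` is a candidate for `F_m`: it solves the identity asserted for `d_{2m,0}`. -/
def IsSquareFactor (m : ℕ) (f : ℚ[X][X]) : Prop :=
  polyDet 0 (2 * m) m m =
    Polynomial.C (Polynomial.C (factProd (2 * m - 1)) * linProd m 0) * shiftX 1 f ^ 2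

theorem IsSquareFactor.ne_zero {m : ℕ} {f : ℚ[X][X]} (hf : IsSquareFactor m f) : f ≠ 0 := by
  rintro rfl
  apply polyDet_two_mul_ne_zero 0 m
  rw [hf, shiftX, Polynomial.map_zero, zero_pow two_ne_zero, mul_zero]

theorem isSquareFactor_zero_one : IsSquareFactor 0 1 := by
  simp [IsSquareFactor, polyDet, clearedDet, shiftX, linProd, factProd]

theorem isSquareFactor_iff_neg_one {m : ℕ} {f : ℚ[X][X]} : IsSquareFactor m f ↔
    polyDet (-1) (2 * m) m m =
      Polynomial.C (Polynomial.C (factProd (2 * m - 1)) * linProd m (-1)) * f ^ 2 := by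
  rw [← (shiftX_injective 1).eq_iff, shiftX_polyDet, shiftX_mul, shiftX_pow, shiftX_C,
    Polynomial.mul_comp, Polynomial.C_comp, linProd_comp, neg_add_cancel, IsSquareFactor]

theorem IsSquareFactor.polyDet_one {m : ℕ} {f : ℚ[X][X]} (hf : IsSquareFactor m f) :
    polyDet 1 (2 * m) m m =
      Polynomial.C (Polynomial.C (factProd (2 * m - 1)) * linProd m 1) * shiftX 2 f ^ 2 := by
  have h := congrArg (shiftX 1) hf
  rw [shiftX_polyDet, shiftX_mul, shiftX_pow, shiftX_C, Polynomial.mul_comp, Polynomial.C_comp,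
    linProd_comp, shiftX_shiftX, zero_add, one_add_one_eq_two] at h
  exact h

theorem C_C_inv_mul_cancel {r : ℚ} (hr : r ≠ 0) (f : ℚ[X][X]) :
    Polynomial.C (Polynomial.C r) * (Polynomial.C (Polynomial.C r⁻¹) * f) = f := by
  rw [← mul_assoc, ← map_mul, ← map_mul, mul_inv_cancel₀ hr, map_one, map_one, one_mul]

theorem IsSquareFactor.exists_succ {m : ℕ} {f : ℚ[X][X]} (hf : IsSquareFactor m f) :
    ∃ g, IsSquareFactor (m + 1) g ∧ polyDet 0 (2 * m + 1) (m + 1) m =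
      Polynomial.C (Polynomial.C ((-1) ^ m * factProd (2 * m)) * linProd m 1) *
        (g * shiftX 2 f) := by
  have hrec := two_mul_add_one_mul_polyDet_self (-1) m
  rw [show (-1 + 2 : ℚ) = 1 by norm_num, hf.polyDet_one, neg_add_cancel, map_zero, add_zero]
    at hrec
  let E : ℚ[X][X] := polyDet (-1) (2 * (m + 1)) (m + 1) (m + 1)
  let G : ℚ[X][X] := polyDet 0 (2 * m + 1) (m + 1) m
  let r : ℚ := (-1) ^ m * factProd (2 * m)
  have hr : r ≠ 0 := mul_ne_zero (by simp) (factProd_ne_zero _)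
  have hscale : (factProd (2 * m + 1))⁻¹ = (2 * m + 1) * factProd (2 * m - 1) * r⁻¹ ^ 2 := by
    have hsq : r ^ 2 = _ := neg_one_pow_mul_factProd_sq m
    have := factProd_ne_zero (2 * m + 1)
    field_simp
    linear_combination hsq
  have hnormalized : Polynomial.C (Polynomial.C (factProd (2 * m + 1))⁻¹) * E *
      (Polynomial.C (linProd m 1) * shiftX 2 f ^ 2) =
      Polynomial.C X * (Polynomial.C (Polynomial.C r⁻¹) * G) ^ 2 := by
    rw [hscale]
    simp only [map_mul, map_add, map_pow, map_natCast, map_ofNat, map_one] at hrec ⊢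
    linear_combination Polynomial.C (Polynomial.C r⁻¹) ^ 2 * hrec
  have hsquarefree : Squarefree (Polynomial.C X * Polynomial.C (linProd m 1) : ℚ[X][X]) := by
    rw [← map_mul, ← linProd_succ_neg_one]
    exact squarefree_C_linProd _ _
  obtain ⟨g, hG, hE⟩ :=
    exists_factor_of_mul_sq_eq hsquarefree (shiftX_ne_zero 2 hf.ne_zero) hnormalized
  refine ⟨g, isSquareFactor_iff_neg_one.mpr ?_, ?_⟩
  · rw [← C_C_inv_mul_cancel (factProd_ne_zero (2 * m + 1)) (polyDet _ _ _ _), hE,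
      linProd_succ_neg_one, show 2 * (m + 1) - 1 = 2 * m + 1 by omega, map_mul, map_mul]
    ring
  · rw [← C_C_inv_mul_cancel hr (polyDet _ _ _ _), hG, map_mul Polynomial.C _ (linProd m 1)]
    ring

theorem polyDet_two_mul_eq {F : ℕ → ℚ[X][X]} (h0 : F 0 = 1) (hF : ∀ m, F m ≠ 0)
    (hodd : ∀ m, polyDet 0 (2 * m + 1) (m + 1) m =
      Polynomial.C (Polynomial.C ((-1) ^ m * factProd (2 * m)) * linProd m 1) *
        (F (m + 1) * shiftX 2 (F m))) (m : ℕ) :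
    polyDet 0 (2 * m) (m + 1) m =
      Polynomial.C (Polynomial.C (factProd (2 * m - 1)) * linProd m 1) *
        (F m * shiftX 2 (F m)) := by
  induction m with
  | zero => simp [polyDet, clearedDet, h0, shiftX, linProd, factProd]
  | succ m ih =>
    have hrec := two_mul_add_one_mul_polyDet_succ 0 m
    have hodd₂ := congrArg (shiftX 2) (hodd m)
    have ih₂ := congrArg (shiftX 2) ih
    rw [shiftX_polyDet, shiftX_mul, shiftX_mul, shiftX_C, Polynomial.mul_comp, Polynomial.C_comp,
      linProd_comp] at hodd₂ ih₂
    have hlast : linProd (m + 1) 1 = linProd m 1 * (X + Polynomial.C (0 + 2 * m + 2 : ℚ)) := by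
      rw [linProd_succ]
      ring_nf
    have hsq : (Polynomial.C (Polynomial.C ((-1) ^ m * factProd (2 * m))) : ℚ[X][X]) ^ 2 =
        Polynomial.C (Polynomial.C (factProd (2 * m + 1))) *
          Polynomial.C (Polynomial.C (factProd (2 * m - 1))) * (2 * m + 1) := by
      rw [← map_pow, ← map_pow, neg_one_pow_mul_factProd_sq]
      simp only [map_mul, map_add, map_natCast, map_ofNat, map_one]
    have hne : (2 * (m : ℚ[X][X]) + 1) * polyDet (0 + 2) (2 * m) (m + 1) m ≠ 0 := by
      rw [ih₂]
      refine mul_ne_zero (by exact_mod_cast (2 * m).succ_ne_zero) (mul_ne_zero ?_ ?_)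
      · exact Polynomial.C_ne_zero.mpr (mul_ne_zero
          (Polynomial.C_ne_zero.mpr (factProd_ne_zero _)) (linProd_ne_zero _ _))
      · exact mul_ne_zero (shiftX_ne_zero 2 (hF m)) (shiftX_ne_zero 2 (shiftX_ne_zero 2 (hF m)))
    apply mul_left_cancel₀ hne
    rw [hodd m, hodd₂] at hrec
    rw [mul_assoc, mul_comm (polyDet _ _ _ _), hrec, ih₂, hlast,
      show 2 * (m + 1) - 1 = 2 * m + 1 by omega,
      map_mul Polynomial.C _ (linProd _ _), map_mul Polynomial.C _ (linProd _ _),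
      map_mul Polynomial.C _ (linProd _ _), map_mul Polynomial.C _ (_ * _),
      map_mul Polynomial.C (linProd _ _)]
    linear_combination Polynomial.C (linProd m 1) * Polynomial.C (linProd m (1 + 2)) *
      Polynomial.C (X + Polynomial.C (0 + 2 * m + 2 : ℚ)) * F (m + 1) * shiftX 2 (F m) *
      shiftX 2 (F (m + 1)) * shiftX 2 (shiftX 2 (F m)) * hsq

theorem exists_seq_isSquareFactor : ∃ F : ℕ → ℚ[X][X], F 0 = 1 ∧ (∀ m, IsSquareFactor m (F m)) ∧
    ∀ m, polyDet 0 (2 * m + 1) (m + 1) m =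
      Polynomial.C (Polynomial.C ((-1) ^ m * factProd (2 * m)) * linProd m 1) *
        (F (m + 1) * shiftX 2 (F m)) := by
  choose! g hg using fun m f => IsSquareFactor.exists_succ (m := m) (f := f)
  let F : ℕ → ℚ[X][X] := fun m => Nat.rec 1 g m
  have hF (m : ℕ) : IsSquareFactor m (F m) := by
    induction m with
    | zero => exact isSquareFactor_zero_one
    | succ m ih => exact (hg m (F m) ih).1
  exact ⟨F, rfl, hF, fun m => (hg m (F m) (hF m)).2⟩

end Factorization

section Normalization

theorem pPoly_eq (n : ℕ) (k : ℤ) : pPoly n k =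
    Polynomial.C (factProd (n - 1)) * linProd ((n - k.natAbs + 1) / 2) k.natAbs :=
  rfl

theorem pPoly_two_mul_zero (m : ℕ) :
    pPoly (2 * m) 0 = Polynomial.C (factProd (2 * m - 1)) * linProd m 0 := by
  rw [pPoly_eq, Int.natAbs_zero, Nat.cast_zero, show (2 * m - 0 + 1) / 2 = m by omega]

theorem pPoly_two_mul_one (m : ℕ) :
    pPoly (2 * m) 1 = Polynomial.C (factProd (2 * m - 1)) * linProd m 1 := by
  rw [pPoly_eq, Int.natAbs_one, Nat.cast_one, show (2 * m - 1 + 1) / 2 = m by omega]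

theorem pPoly_two_mul_add_one_one (m : ℕ) :
    pPoly (2 * m + 1) 1 = Polynomial.C (factProd (2 * m)) * linProd m 1 := by
  rw [pPoly_eq, Int.natAbs_one, Nat.cast_one, show (2 * m + 1 - 1 + 1) / 2 = m by omega,
    Nat.add_sub_cancel]

theorem sum_range_two_mul_add_one_div_two (m : ℕ) :
    ∑ i ∈ range (2 * m), (i + 1) / 2 = m ^ 2 := by
  induction m with
  | zero => rfl
  | succ m ih =>
    rw [mul_add_one, sum_range_succ, sum_range_succ, ih,
      show (2 * m + 1) / 2 = m by omega, show (2 * m + 1 + 1) / 2 = m + 1 by omega]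
    ring

theorem cExp_two_mul_zero (m : ℕ) : cExp (2 * m) 0 = -((m ^ 2 : ℕ) : ℤ) := by
  rw [cExp, if_neg (by omega), if_neg (by omega), ← sum_range_two_mul_add_one_div_two, sub_zero,
    Int.toNat_natCast]

theorem cExp_two_mul_one (m : ℕ) : cExp (2 * m) 1 = -((m * (m - 1) : ℕ) : ℤ) := by
  cases m with
  | zero => rfl
  | succ m =>
    rw [cExp, if_neg (by omega), if_neg (by omega),
      show ((2 * (m + 1) : ℕ) - 1 : ℤ).toNat = 2 * m + 1 by omega, sum_range_succ,
      sum_range_two_mul_add_one_div_two, show (2 * m + 1) / 2 = m by omega, Nat.add_sub_cancel]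
    congr 2
    ring

theorem cExp_two_mul_add_one_one (m : ℕ) : cExp (2 * m + 1) 1 = -((m ^ 2 : ℕ) : ℤ) := by
  cases m with
  | zero => rfl
  | succ m =>
    rw [cExp, if_neg (by omega), if_neg (by omega), ← sum_range_two_mul_add_one_div_two,
      show ((2 * (m + 1) + 1 : ℕ) - 1 : ℤ).toNat = 2 * (m + 1) by omega]

theorem neg_one_pow_sq {R : Type*} [Ring R] (m : ℕ) : (-1 : R) ^ m ^ 2 = (-1) ^ m :=
  neg_one_pow_congr (by simp [Nat.even_pow])

theorem neg_one_pow_mul_pred {R : Type*} [Ring R] (m : ℕ) : (-1 : R) ^ (m * (m - 1)) = 1 :=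
  (Nat.even_mul_pred_self m).neg_one_pow

theorem neg_one_pow_mul_neg_one_pow {R : Type*} [Ring R] (m : ℕ) :
    (-1 : R) ^ m * (-1) ^ m = 1 := by
  rw [← pow_add, (Even.add_self m).neg_one_pow]

theorem toLaurent_C_C_neg_one_pow_mul (m : ℕ) (a : ℚ) (p : ℚ[X]) :
    toLaurent (Polynomial.C (Polynomial.C ((-1) ^ m * a) * p)) =
      (-1) ^ m * LaurentPolynomial.C (Polynomial.C a * p) := by
  rw [toLaurent_C, map_mul Polynomial.C, mul_assoc, map_mul LaurentPolynomial.C, map_pow, map_pow,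
    map_neg, map_neg, map_one, map_one]

theorem dd_two_mul_zero (m : ℕ) : dd (2 * m) 0 0 =
    (-1) ^ m * T (cExp (2 * m) 0) * toLaurent (polyDet 0 (2 * m) m m) := by
  have hs : ∑ i ∈ range (2 * m + 1 - m), i + ∑ i ∈ range m, i = m ^ 2 := by
    rw [show 2 * m + 1 - m = m + 1 by omega, sum_range_succ_id_add_sum_range_id]
  have h := dd_eq_toLaurent_polyDet (2 * m) m (by omega) hs
  rwa [sub_self, ← cExp_two_mul_zero, neg_one_pow_sq] at h

theorem dd_two_mul_one (m : ℕ) : dd (2 * m) 1 0 =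
    T (cExp (2 * m) 1) * toLaurent (polyDet 0 (2 * m) (m + 1) m) := by
  have hs : ∑ i ∈ range (2 * m + 1 - (m + 1)), i + ∑ i ∈ range m, i = m * (m - 1) := by
    rw [show 2 * m + 1 - (m + 1) = m by omega, ← mul_two, sum_range_id_mul_two]
  have h := dd_eq_toLaurent_polyDet (2 * m) (m + 1) (by omega) hs
  rwa [Nat.cast_succ, add_sub_cancel_left, ← cExp_two_mul_one, neg_one_pow_mul_pred,
    one_mul] at h

theorem dd_two_mul_add_one_one (m : ℕ) : dd (2 * m + 1) 1 0 =
    (-1) ^ m * T (cExp (2 * m + 1) 1) * toLaurent (polyDet 0 (2 * m + 1) (m + 1) m) := by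
  have hs : ∑ i ∈ range (2 * m + 1 + 1 - (m + 1)), i + ∑ i ∈ range m, i = m ^ 2 := by
    rw [show 2 * m + 1 + 1 - (m + 1) = m + 1 by omega, sum_range_succ_id_add_sum_range_id]
  have h := dd_eq_toLaurent_polyDet (2 * m + 1) (m + 1) (by omega) hs
  rwa [Nat.cast_succ, add_sub_cancel_left, ← cExp_two_mul_add_one_one, neg_one_pow_sq] at h

end Normalization

/-- there are polynomials F_m(x,q) ∈ ℚ[x,q], F_0 = 1, with
d_{2n,0}(x,q) = (-1)^n·q^{c(2n,0)}·p_{2n,0}(x)·F_n(x+1,q)² and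
d_{n,1}(x,q) = q^{c(n,1)}·p_{n,1}(x)·F_{⌊(n+1)/2⌋}(x,q)·F_{⌊n/2⌋}(x+2,q) for all n ≥ 1. -/
theorem statement8 :
    ∃ F : ℕ → Polynomial (Polynomial ℚ), F 0 = 1 ∧
      ∀ n : ℕ, 1 ≤ n →
        (dd (2 * n) 0 0 = (-1) ^ n * LaurentPolynomial.T (cExp (2 * n) 0) *
            LaurentPolynomial.C (pPoly (2 * n) 0) *
            (Polynomial.toLaurent (shiftX 1 (F n))) ^ 2) ∧
        (dd n 1 0 = LaurentPolynomial.T (cExp n 1) * LaurentPolynomial.C (pPoly n 1) *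
            Polynomial.toLaurent (F ((n + 1) / 2)) *
            Polynomial.toLaurent (shiftX 2 (F (n / 2)))) := by
  obtain ⟨F, h0, heven, hodd⟩ := exists_seq_isSquareFactor
  refine ⟨F, h0, fun n _ => ⟨?_, ?_⟩⟩
  · rw [dd_two_mul_zero, heven n, ← pPoly_two_mul_zero, map_mul, map_pow, toLaurent_C]
    ring
  · obtain ⟨m, rfl | rfl⟩ := Nat.even_or_odd' n
    · rw [dd_two_mul_one, polyDet_two_mul_eq h0 (fun m => (heven m).ne_zero) hodd,
        ← pPoly_two_mul_one, map_mul, map_mul, toLaurent_C,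
        show (2 * m + 1) / 2 = m by omega, show 2 * m / 2 = m by omega]
      ring
    · rw [dd_two_mul_add_one_one, hodd, map_mul toLaurent, map_mul toLaurent,
        toLaurent_C_C_neg_one_pow_mul, ← pPoly_two_mul_add_one_one,
        show (2 * m + 1 + 1) / 2 = m + 1 by omega, show (2 * m + 1) / 2 = m by omega]
      linear_combination T (cExp (2 * m + 1) 1) * LaurentPolynomial.C (pPoly (2 * m + 1) 1) *
        toLaurent (F (m + 1)) * toLaurent (shiftX 2 (F m)) * neg_one_pow_mul_neg_one_pow (R := RQ) m

end
end

section
/- There exists a sequence of polynomials P_m(Q) ∈ ℚ[Q] (m ≥ 2) such that for every positive integer n the Q-enumeration polynomials of alternating sign matrices satisfy A_{2n}(Q) = 2·P_{2n}(Q)·P_{2n+1}(Q) and A_{2n+1}(Q) = P_{2n+1}(Q)·P_{2n+2}(Q), as identities of polynomials in Q. In particular, each A_n(Q) is a product of two polynomials in Q with rational coefficients. -/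
open Finset

noncomputable section

/-- A matrix is an alternating sign matrix: entries in {-1,0,1}, all row and column sums 1,
and all partial row and column sums (from the start) equal to 0 or 1. -/
def IsASM {n : ℕ} (A : Matrix (Fin n) (Fin n) ℤ) : Prop :=
  (∀ i j, A i j = -1 ∨ A i j = 0 ∨ A i j = 1) ∧
  (∀ i, ∑ j, A i j = 1) ∧
  (∀ j, ∑ i, A i j = 1) ∧
  (∀ i j, (∑ j' ∈ Finset.Iic j, A i j') = 0 ∨ (∑ j' ∈ Finset.Iic j, A i j') = 1) ∧
  (∀ i j, (∑ i' ∈ Finset.Iic i, A i' j) = 0 ∨ (∑ i' ∈ Finset.Iic i, A i' j) = 1)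

open scoped Classical in
/-- The (finite) set of all alternating sign matrices of size n; since every ASM has entries
in {-1,0,1}, it occurs in the image below. -/
noncomputable def asmFinset (n : ℕ) : Finset (Matrix (Fin n) (Fin n) ℤ) :=
  ((Finset.univ : Finset (Matrix (Fin n) (Fin n) (Fin 3))).image
    (fun B => Matrix.of fun i j => ((B i j : ℕ) : ℤ) - 1)).filter (fun A => IsASM A)

/-- μ(A): the number of entries of A equal to -1. -/
def asmMu {n : ℕ} (A : Matrix (Fin n) (Fin n) ℤ) : ℕ :=
  (Finset.univ.filter (fun p : Fin n × Fin n => A p.1 p.2 = -1)).card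

/-- The Q-enumeration A_n(Q) = ∑_A Q^{μ(A)} of alternating sign matrices of size n. -/
noncomputable def asmEnum {S : Type*} [CommRing S] (n : ℕ) (Q : S) : S :=
  ∑ A ∈ asmFinset n, Q ^ asmMu A

/-- The Q-enumeration of ASMs of size n as a polynomial in Q over ℚ. -/
noncomputable def asmPoly (n : ℕ) : Polynomial ℚ :=
  ∑ A ∈ asmFinset n, (Polynomial.X : Polynomial ℚ) ^ asmMu A

/-!
Consider the six-vertex model whose weights are `1 - (1 - ρ²)xy ± ρ(x + y)` at the vertices that
are passed straight through, and `1` and `4ρ²(1 + (1 - ρ²)x²)(1 + (1 - ρ²)y²)` at the two kinds of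
turns, `x` and `y` being parameters of the row and of the column. At `x = y = 0` its domain wall
partition function is `A_n(4ρ²)`.

The Yang–Baxter equation makes the partition function symmetric in the row parameters. As a
polynomial in one column parameter it has small degree, and where a straight weight vanishes it
reduces to a smaller partition function, so Lagrange interpolation gives the Izergin–Korepin
formula: up to the Vandermonde determinants of the parameters it is the determinant of the inverse
products of the two straight weights. Letting all parameters tend to `0` yields
`A_n(4r) = det (c_ij)`, `0 ≤ i, j < n`, with `c_ij` the coefficient of `x^i y^j` in
`1 / (1 - r(x² + y²) - 2xy + (1 - r)²x²y²)`. This function is invariant under `(x, y) ↦ (-x, -y)`,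
so `c_ij = 0` for `i + j` odd, and the determinant is the product of its minors over the even and
over the odd indices. From `n` to `n + 1` only one of these two minors changes.
-/

namespace SixVertex

variable {R S : Type*} [CommRing R] [CommRing S]

/-! ### Determinants -/

section Determinants

open Polynomial

/-- The leading principal minor of order `n` of an infinite matrix. -/
def leadingMinor (c : ℕ → ℕ → R) (n : ℕ) : R :=
  (Matrix.of fun i j : Fin n => c i j).det

theorem map_leadingMinor (f : R →+* S) (c : ℕ → ℕ → R) (n : ℕ) :
    f (leadingMinor c n) = leadingMinor (fun i j => f (c i j)) n :=
  f.map_det _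

/-- The indices below `n`, split into the even and the odd ones. -/
def evenOddEquiv (n : ℕ) : Fin ((n + 1) / 2) ⊕ Fin (n / 2) ≃ Fin n :=
  Equiv.ofBijective (Sum.elim (fun i => ⟨2 * i, by omega⟩) fun i => ⟨2 * i + 1, by omega⟩) <| by
    rw [Fintype.bijective_iff_injective_and_card]
    refine ⟨Function.Injective.sumElim ?_ ?_ ?_, ?_⟩
    · grind [Function.Injective]
    · grind [Function.Injective]
    · grind
    · simp only [Fintype.card_sum, Fintype.card_fin]
      omega

theorem leadingMinor_eq_mul_of_odd_eq_zero {c : ℕ → ℕ → R}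
    (hc : ∀ i j, Odd (i + j) → c i j = 0) (n : ℕ) :
    leadingMinor c n = leadingMinor (fun i j => c (2 * i) (2 * j)) ((n + 1) / 2) *
      leadingMinor (fun i j => c (2 * i + 1) (2 * j + 1)) (n / 2) := by
  rw [leadingMinor, ← Matrix.det_submatrix_equiv_self (evenOddEquiv n), leadingMinor, leadingMinor,
    ← Matrix.det_fromBlocks_zero₂₁ _ 0]
  congr 1
  ext (i | i) (j | j)
  · rfl
  · exact hc _ _ (by simp [evenOddEquiv, parity_simps])
  · exact hc _ _ (by simp [evenOddEquiv, parity_simps])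
  · rfl

theorem det_vandermonde_cons {n : ℕ} (z : R) (y : Fin n → R) :
    (Matrix.vandermonde (Fin.cons z y : Fin (n + 1) → R)).det =
      (∏ j, (y j - z)) * (Matrix.vandermonde y).det := by
  rw [Matrix.det_vandermonde, Matrix.det_vandermonde, Fin.prod_univ_succ, Fin.prod_Ioi_zero]
  simp only [Fin.cons_zero, Fin.cons_succ, Fin.prod_Ioi_succ]

theorem natDegree_det_le {ι : Type*} [DecidableEq ι] [Fintype ι] {M : Matrix ι ι R[X]} {d : ι → ℕ}
    (h : ∀ i j, (M i j).natDegree ≤ d j) : M.det.natDegree ≤ ∑ j, d j := by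
  rw [Matrix.det_apply]
  refine natDegree_sum_le_of_forall_le _ _ fun σ _ => (natDegree_smul_le _ _).trans ?_
  exact (natDegree_prod_le _ _).trans (Finset.sum_le_sum fun j _ => h (σ j) j)

end Determinants

/-! ### Bivariate power series along lines through the origin -/

section Lines

open PowerSeries

/-- The exponent of the monomial `x ^ p * y ^ q` in the two variables `x = X 0` and `y = X 1`. -/
def biExponent (p q : ℕ) : Fin 2 →₀ ℕ := Finsupp.single 0 p + Finsupp.single 1 q

/-- The restriction `F ↦ F (α X, β X)` of a bivariate power series to the line through the origin
in direction `(α, β)`. -/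
def alongLine (α β : R) : MvPowerSeries (Fin 2) R →+* R⟦X⟧ :=
  (MvPowerSeries.rename fun _ : Fin 2 => ()).toRingHom.comp (MvPowerSeries.rescale ![α, β])

theorem rescale_C {σ : Type*} (a : σ → R) (r : R) :
    MvPowerSeries.rescale a (MvPowerSeries.C r) = MvPowerSeries.C r := by
  classical
  ext k
  rw [MvPowerSeries.coeff_rescale, MvPowerSeries.coeff_C]
  split_ifs with hk
  · rw [hk, Finsupp.prod_zero_index, one_mul]
  · rw [mul_zero]

theorem rescale_X {σ : Type*} (a : σ → R) (i : σ) :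
    MvPowerSeries.rescale a (MvPowerSeries.X i) = MvPowerSeries.C (a i) * MvPowerSeries.X i := by
  classical
  ext k
  rw [MvPowerSeries.coeff_rescale, MvPowerSeries.coeff_C_mul, MvPowerSeries.coeff_X]
  split_ifs with hk
  · rw [hk, Finsupp.prod_single_index (h := fun i m => a i ^ m) (pow_zero _), pow_one]
  · rw [mul_zero, mul_zero]

theorem alongLine_C (α β r : R) : alongLine α β (MvPowerSeries.C r) = C r := by
  rw [alongLine, RingHom.comp_apply, rescale_C]
  exact MvPowerSeries.rename_C ..

theorem alongLine_X (α β : R) (i : Fin 2) :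
    alongLine α β (MvPowerSeries.X i) = C (![α, β] i) * X := by
  rw [alongLine, RingHom.comp_apply, rescale_X, map_mul]
  exact congrArg₂ _ (MvPowerSeries.rename_C ..) (MvPowerSeries.rename_X ..)

theorem coeff_alongLine (α β : R) (F : MvPowerSeries (Fin 2) R) (k : ℕ) :
    coeff k (alongLine α β F) =
      ∑ p ∈ antidiagonal k, MvPowerSeries.coeff (biExponent p.1 p.2) F * (α ^ p.1 * β ^ p.2) := by
  refine .trans (MvPowerSeries.coeff_rename _ _ (Finsupp.single () k)) (.symm ?_)
  refine Finset.sum_nbij' (fun p => biExponent p.1 p.2) (fun m => (m 0, m 1)) ?_ ?_ ?_ ?_ ?_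
  · intro p hp
    simp [biExponent, Finsupp.mapDomain_add, Finsupp.mapDomain_single,
      ← Finsupp.single_add, HasAntidiagonal.mem_antidiagonal.1 hp]
  · intro m hm
    simpa [HasAntidiagonal.mem_antidiagonal, Finsupp.mapDomain, Finsupp.sum_fintype,
      ← Finsupp.single_add] using hm
  · simp [biExponent]
  · intro m _
    ext i
    fin_cases i <;> simp [biExponent]
  · intro p _
    simp [MvPowerSeries.coeff_rescale, biExponent, mul_comm]

/-- The coefficient of `X ^ a` in the remainder of `X ^ p` on division by `∏ i, (X - α i)`. -/
def remainderCoeff {n : ℕ} (α : Fin n → R) (a p : ℕ) : R :=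
  (Polynomial.X ^ p %ₘ Lagrange.nodal Finset.univ α).coeff a

theorem sum_remainderCoeff_mul_pow [Nontrivial R] {n : ℕ} (α : Fin n → R) (i : Fin n) (p : ℕ) :
    ∑ a : Fin n, remainderCoeff α a p * α i ^ (a : ℕ) = α i ^ p := by
  have h := congrArg (Polynomial.eval (α i)) <| Polynomial.sum_modByMonic_coeff
    (p := Polynomial.X ^ p) (Lagrange.nodal_monic (s := Finset.univ) (v := α)) (n := n) (by simp)
  rw [Polynomial.eval_finsetSum, Polynomial.eval, Polynomial.eval₂_modByMonic_eq_self_of_root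
    (Lagrange.eval_nodal_at_node (Finset.mem_univ i))] at h
  simpa only [remainderCoeff, Polynomial.eval_monomial, Polynomial.eval₂_X_pow] using h

theorem remainderCoeff_of_lt [Nontrivial R] {n : ℕ} (α : Fin n → R) (a : ℕ) {p : ℕ} (hp : p < n) :
    remainderCoeff α a p = if a = p then 1 else 0 := by
  rw [remainderCoeff, (Polynomial.modByMonic_eq_self_iff Lagrange.nodal_monic).2,
    Polynomial.coeff_X_pow]
  simpa using hp

/-- The coefficient of `x ^ a * y ^ b` in the remainder of `F (x X, y X)` on division by
`∏ i, (x - α i)` and `∏ j, (y - β j)`, as a power series in `X`. -/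
def remainderSeries {n : ℕ} (α β : Fin n → R) (F : MvPowerSeries (Fin 2) R) (a b : ℕ) : R⟦X⟧ :=
  mk fun k => ∑ p ∈ antidiagonal k, MvPowerSeries.coeff (biExponent p.1 p.2) F *
    (remainderCoeff α a p.1 * remainderCoeff β b p.2)

theorem alongLine_eq_sum_remainderSeries [Nontrivial R] {n : ℕ} (α β : Fin n → R)
    (F : MvPowerSeries (Fin 2) R) (i j : Fin n) :
    alongLine (α i) (β j) F =
      ∑ a : Fin n, ∑ b : Fin n, C (α i ^ (a : ℕ) * β j ^ (b : ℕ)) * remainderSeries α β F a b := by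
  ext k
  calc coeff k (alongLine (α i) (β j) F)
      = ∑ p ∈ antidiagonal k, MvPowerSeries.coeff (biExponent p.1 p.2) F *
          ((∑ a : Fin n, remainderCoeff α a p.1 * α i ^ (a : ℕ)) *
            ∑ b : Fin n, remainderCoeff β b p.2 * β j ^ (b : ℕ)) := by
        simp only [coeff_alongLine, sum_remainderCoeff_mul_pow]
    _ = _ := ?_
  simp only [map_sum, coeff_C_mul, remainderSeries, coeff_mk, Finset.sum_mul_sum]
  simp only [Finset.mul_sum]
  rw [Finset.sum_comm]
  refine Finset.sum_congr rfl fun a _ => ?_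
  rw [Finset.sum_comm]
  refine Finset.sum_congr rfl fun b _ => Finset.sum_congr rfl fun p _ => ?_
  ring

theorem exists_remainderSeries_eq_X_pow_mul [Nontrivial R] {n : ℕ} (α β : Fin n → R)
    (F : MvPowerSeries (Fin 2) R) (a b : Fin n) :
    ∃ H : R⟦X⟧, constantCoeff H = MvPowerSeries.coeff (biExponent a b) F ∧
      remainderSeries α β F a b = X ^ (a + b : ℕ) * H := by
  have coeff_low {p q : ℕ} (h : p + q ≤ a + b) :
      remainderCoeff α a p * remainderCoeff β b q = if a = p ∧ b = q then 1 else 0 := by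
    rcases lt_or_ge p n with hp | hp
    · rcases lt_or_ge q n with hq | hq
      · simp only [remainderCoeff_of_lt _ _ hp, remainderCoeff_of_lt _ _ hq, ite_and, ite_mul,
          one_mul, zero_mul]
      · rw [remainderCoeff_of_lt _ _ hp, if_neg (by omega), if_neg (by omega), zero_mul]
    · rw [remainderCoeff_of_lt β _ (by omega), if_neg (by omega), if_neg (by omega), mul_zero]
  have coeff_series {k : ℕ} (hk : k ≤ a + b) : coeff k (remainderSeries α β F a b) =
      if k = a + b then MvPowerSeries.coeff (biExponent a b) F else 0 := by
    rw [remainderSeries, coeff_mk, Finset.sum_congr rfl fun p hp => by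
      rw [coeff_low ((HasAntidiagonal.mem_antidiagonal.1 hp).trans_le hk)]]
    simp only [← Prod.mk_inj, Prod.mk.eta, mul_ite, mul_one, mul_zero, Finset.sum_ite_eq,
      HasAntidiagonal.mem_antidiagonal, eq_comm (a := k)]
  obtain ⟨H, hH⟩ := X_pow_dvd_iff.2 fun k (hk : k < a + b) =>
    (coeff_series hk.le).trans (if_neg hk.ne)
  refine ⟨H, ?_, hH⟩
  have := coeff_series le_rfl
  rwa [hH, if_pos rfl, coeff_X_pow_mul', if_pos le_rfl, Nat.sub_self,
    coeff_zero_eq_constantCoeff_apply] at this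

theorem exists_alongLine_eq_vandermonde_mul_mul [Nontrivial R] {n : ℕ} (α β : Fin n → R)
    (F : MvPowerSeries (Fin 2) R) :
    ∃ H : Matrix (Fin n) (Fin n) R⟦X⟧,
      (∀ a b, constantCoeff (H a b) = MvPowerSeries.coeff (biExponent a b) F) ∧
      Matrix.of (fun i j => alongLine (α i) (β j) F) =
        Matrix.vandermonde (fun i => C (α i) * X) * H *
          (Matrix.vandermonde fun j => C (β j) * X).transpose := by
  choose H hH hX using exists_remainderSeries_eq_X_pow_mul α β F
  refine ⟨.of H, hH, ?_⟩
  ext1 i j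
  simp only [Matrix.of_apply, alongLine_eq_sum_remainderSeries, hX, Matrix.mul_apply,
    Matrix.vandermonde_apply, Matrix.transpose_apply, Finset.sum_mul]
  rw [Finset.sum_comm]
  refine Finset.sum_congr rfl fun b _ => Finset.sum_congr rfl fun a _ => ?_
  rw [map_mul, map_pow, map_pow]
  ring

end Lines

/-! ### The six-vertex model -/

section Weights

/-- The six-vertex weight of a vertex whose horizontal and vertical edges agree. The weights are
parametrized rationally by `ρ`, a row parameter `x` and a column parameter `y`, so that they are
all equal to `1` at `x = y = 0`, except for `weightC`, which is `4 * ρ ^ 2`. -/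
def weightA (ρ x y : R) : R := 1 - (1 - ρ ^ 2) * (x * y) + ρ * (x + y)

/-- The six-vertex weight of a vertex whose horizontal and vertical edges differ. -/
def weightB (ρ x y : R) : R := 1 - (1 - ρ ^ 2) * (x * y) - ρ * (x + y)

/-- The six-vertex weight of an entry `-1`; an entry `1` has weight `1`. -/
def weightC (ρ x y : R) : R :=
  4 * ρ ^ 2 * (1 + (1 - ρ ^ 2) * x ^ 2) * (1 + (1 - ρ ^ 2) * y ^ 2)

/-- The product of `weightA ρ` and `weightB ρ`, in terms of `r = ρ ^ 2`. -/
def weightAB (r x y : R) : R :=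
  1 - r * (x ^ 2 + y ^ 2) - 2 * (x * y) + (1 - r) ^ 2 * (x ^ 2 * y ^ 2)

theorem weightA_mul_weightB (ρ x y : R) :
    weightA ρ x y * weightB ρ x y = weightAB (ρ ^ 2) x y := by
  unfold weightA weightB weightAB
  ring

/-- The vertex weights as a matrix in the horizontal states, for given states of the vertical edges
above and below. In both directions the states of the two edges differ by the matrix entry that the
vertex stands for. -/
def vertex (ρ x y : R) : Bool → Bool → Matrix Bool Bool R
  | false, false => Matrix.diagonal fun h => bif h then weightB ρ x y else weightA ρ x y
  | true, true => Matrix.diagonal fun h => bif h then weightA ρ x y else weightB ρ x y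
  | false, true => Matrix.single false true 1
  | true, false => Matrix.single true false (weightC ρ x y)

/-- The product of the vertices of one row, as a matrix in the horizontal boundary states. -/
def rowWeight (ρ x : R) : {n : ℕ} → (Fin n → R) → (Fin n → Bool) → (Fin n → Bool) →
    Matrix Bool Bool R
  | 0, _, _, _ => 1
  | _ + 1, y, s, t =>
    vertex ρ x (y 0) (s 0) (t 0) * rowWeight ρ x (Fin.tail y) (Fin.tail s) (Fin.tail t)

/-- The row-to-row transfer matrix with domain wall horizontal boundary. -/
def transfer (ρ x : R) {n : ℕ} (y : Fin n → R) : Matrix (Fin n → Bool) (Fin n → Bool) R :=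
  Matrix.of fun s t => rowWeight ρ x y s t false true

/-- The ordered product of the transfer matrices of several rows. -/
def transferProd (ρ : R) {m n : ℕ} (x : Fin m → R) (y : Fin n → R) :
    Matrix (Fin n → Bool) (Fin n → Bool) R :=
  (List.ofFn fun i => transfer ρ (x i) y).prod

/-- The domain wall partition function with row parameters `x` and column parameters `y`. -/
def partitionFn (ρ : R) {n : ℕ} (x y : Fin n → R) : R :=
  transferProd ρ x y (fun _ => false) fun _ => true

theorem transferProd_zero (ρ : R) {n : ℕ} (x : Fin 0 → R) (y : Fin n → R) :
    transferProd ρ x y = 1 := by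
  rw [transferProd, List.ofFn_zero, List.prod_nil]

theorem transferProd_cons (ρ x₀ : R) {m n : ℕ} (x : Fin m → R) (y : Fin n → R) :
    transferProd ρ (Fin.cons x₀ x : Fin (m + 1) → R) y =
      transfer ρ x₀ y * transferProd ρ x y := by
  simp only [transferProd, List.ofFn_succ, List.prod_cons, Fin.cons_zero, Fin.cons_succ]

theorem vertex_map (f : R →+* S) (ρ x y : R) (s t : Bool) :
    vertex (f ρ) (f x) (f y) s t = (vertex ρ x y s t).map f := by
  ext g h
  cases s <;> cases t <;> cases g <;> cases h <;>
    simp [vertex, weightA, weightB, weightC, map_ofNat f 4]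

theorem rowWeight_map (f : R →+* S) (ρ x : R) {n : ℕ} (y : Fin n → R) (s t : Fin n → Bool) :
    rowWeight (f ρ) (f x) (f ∘ y) s t = (rowWeight ρ x y s t).map f := by
  induction n with
  | zero => simp [rowWeight]
  | succ n ih =>
    rw [rowWeight, rowWeight, Matrix.map_mul, ← ih, ← vertex_map]
    rfl

theorem transferProd_map (f : R →+* S) (ρ : R) {m n : ℕ} (x : Fin m → R) (y : Fin n → R) :
    transferProd (f ρ) (f ∘ x) (f ∘ y) = f.mapMatrix (transferProd ρ x y) := by
  have transfer_map (x : R) : transfer (f ρ) (f x) (f ∘ y) = f.mapMatrix (transfer ρ x y) := by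
    ext s t
    simp [transfer, rowWeight_map]
  rw [transferProd, transferProd, map_list_prod, List.map_ofFn]
  exact congrArg (fun x => (List.ofFn x).prod) (funext fun i => transfer_map (x i))

theorem partitionFn_map (f : R →+* S) (ρ : R) {n : ℕ} (x y : Fin n → R) :
    partitionFn (f ρ) (f ∘ x) (f ∘ y) = f (partitionFn ρ x y) := by
  rw [partitionFn, transferProd_map]
  rfl

theorem weightAB_map (f : R →+* S) (r x y : R) :
    weightAB (f r) (f x) (f y) = f (weightAB r x y) := by
  simp [weightAB, map_ofNat f 2]

end Weights

section YangBaxter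

open scoped Kronecker

/-- The weight of two equal states in the R-matrix. -/
def rWeight (ρ x x' : R) : R :=
  2 * ρ * (1 + (1 - ρ ^ 2) * (x * x')) + (1 - 2 * ρ ^ 2) * (x - x')

/-- The R-matrix intertwining two rows. -/
def rMatrix (ρ x x' : R) : Matrix (Bool × Bool) (Bool × Bool) R := Matrix.of fun g h =>
  match g, h with
  | (false, false), (false, false) => rWeight ρ x x'
  | (true, true), (true, true) => rWeight ρ x x'
  | (false, true), (false, true) => 2 * ρ * (1 + (1 - ρ ^ 2) * x ^ 2)
  | (true, false), (true, false) => 2 * ρ * (1 + (1 - ρ ^ 2) * x' ^ 2)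
  | (false, true), (true, false) => x - x'
  | (true, false), (false, true) => x - x'
  | _, _ => 0

theorem yang_baxter (ρ x x' y : R) (s u : Bool) :
    rMatrix ρ x x' * ∑ t, vertex ρ x y s t ⊗ₖ vertex ρ x' y t u =
      (∑ t, vertex ρ x' y s t ⊗ₖ vertex ρ x y t u) * rMatrix ρ x x' := by
  ext ⟨g, g'⟩ ⟨h, h'⟩
  simp only [rMatrix, Matrix.mul_apply, Fintype.sum_prod_type, Fintype.sum_bool, Matrix.add_apply,
    Matrix.kroneckerMap_apply, Matrix.of_apply]
  cases s <;> cases u <;> cases g <;> cases g' <;> cases h <;> cases h' <;>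
    simp [vertex, weightA, weightB, weightC, rWeight] <;> try ring

theorem sum_bool_cons {M : Type*} [AddCommMonoid M] {n : ℕ} (f : (Fin (n + 1) → Bool) → M) :
    ∑ s, f s = ∑ b, ∑ s, f (Fin.cons b s) := by
  rw [← Fintype.sum_prod_type' (f := fun b s => f (Fin.cons b s))]
  exact ((Fin.consEquiv fun _ => Bool).sum_comp f).symm

theorem sum_rowWeight_kronecker_succ (ρ x x' : R) {n : ℕ} (y : Fin (n + 1) → R)
    (s u : Fin (n + 1) → Bool) :
    ∑ t, rowWeight ρ x y s t ⊗ₖ rowWeight ρ x' y t u =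
      (∑ t, vertex ρ x (y 0) (s 0) t ⊗ₖ vertex ρ x' (y 0) t (u 0)) *
      ∑ t, rowWeight ρ x (Fin.tail y) (Fin.tail s) t ⊗ₖ
        rowWeight ρ x' (Fin.tail y) t (Fin.tail u) := by
  rw [sum_bool_cons, Finset.sum_mul]
  refine Finset.sum_congr rfl fun b _ => ?_
  rw [Finset.mul_sum]
  refine Finset.sum_congr rfl fun t _ => ?_
  simp only [rowWeight, Matrix.mul_kronecker_mul, Fin.cons_zero, Fin.tail_cons]

theorem rMatrix_mul_sum_rowWeight (ρ x x' : R) {n : ℕ} (y : Fin n → R) (s u : Fin n → Bool) :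
    rMatrix ρ x x' * ∑ t, rowWeight ρ x y s t ⊗ₖ rowWeight ρ x' y t u =
      (∑ t, rowWeight ρ x' y s t ⊗ₖ rowWeight ρ x y t u) * rMatrix ρ x x' := by
  induction n with
  | zero => simp [rowWeight]
  | succ n ih =>
    rw [sum_rowWeight_kronecker_succ, sum_rowWeight_kronecker_succ, ← mul_assoc, yang_baxter,
      mul_assoc, ih, mul_assoc]

theorem transfer_mul_transfer_apply (ρ x x' : R) {n : ℕ} (y : Fin n → R) (s u : Fin n → Bool) :
    (transfer ρ x y * transfer ρ x' y) s u =
      (∑ t, rowWeight ρ x y s t ⊗ₖ rowWeight ρ x' y t u) (false, false) (true, true) := by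
  simp [Matrix.mul_apply, transfer, Matrix.sum_apply]

theorem transfer_commute [IsDomain R] {ρ x x' : R} (h : rWeight ρ x x' ≠ 0) {n : ℕ}
    (y : Fin n → R) : Commute (transfer ρ x y) (transfer ρ x' y) := by
  ext s u
  rw [transfer_mul_transfer_apply, transfer_mul_transfer_apply]
  have hcorner := congrFun (congrFun (rMatrix_mul_sum_rowWeight ρ x x' y s u) (false, false))
    (true, true)
  simp only [Matrix.mul_apply, Fintype.sum_prod_type, Fintype.sum_bool, rMatrix, Matrix.of_apply,
    zero_mul, mul_zero, zero_add, add_zero] at hcorner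
  rw [mul_comm] at hcorner
  exact mul_right_cancel₀ h hcorner

theorem partitionFn_comp_perm [IsDomain R] {ρ : R} {n : ℕ} {x : Fin n → R}
    (hx : ∀ i j, rWeight ρ (x i) (x j) ≠ 0) (y : Fin n → R) (σ : Equiv.Perm (Fin n)) :
    partitionFn ρ (x ∘ σ) y = partitionFn ρ x y := by
  have hperm := Equiv.Perm.ofFn_comp_perm σ fun i => transfer ρ (x i) y
  have hcomm : (List.ofFn fun i => transfer ρ ((x ∘ σ) i) y).Pairwise Commute :=
    List.pairwise_ofFn.mpr fun i j _ => transfer_commute (hx (σ i) (σ j)) y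
  exact congrFun (congrFun (hperm.prod_eq' hcomm) _) _

end YangBaxter

section Recursion

theorem cons_eq_const_iff {α : Type*} {n : ℕ} (a b : α) (t : Fin n → α) :
    (Fin.cons b t : Fin (n + 1) → α) = (fun _ => a) ↔ b = a ∧ t = fun _ => a := by
  simp [funext_iff, Fin.forall_fin_succ]

theorem rowWeight_false_true_true (ρ x : R) {n : ℕ} (y : Fin n → R) (t : Fin n → Bool) :
    rowWeight ρ x y (fun _ => false) t true true =
      if t = fun _ => false then ∏ j, weightB ρ x (y j) else 0 := by
  induction n with
  | zero => simp [rowWeight, Subsingleton.elim t fun _ => false]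
  | succ n ih =>
    cases t using Fin.consCases with | _ b t
    have htail : Fin.tail (fun _ : Fin (n + 1) => false) = fun _ => false := rfl
    simp only [rowWeight, Matrix.mul_apply, Fintype.sum_bool, htail, Fin.tail_cons, Fin.cons_zero,
      cons_eq_const_iff, ih]
    cases b <;> simp [vertex, Fin.prod_univ_succ, Fin.tail]

theorem transfer_false_of_weightA_eq_zero {ρ x y₀ : R} (h : weightA ρ x y₀ = 0) {n : ℕ}
    (y : Fin n → R) (b : Bool) (t : Fin n → Bool) :
    transfer ρ x (Fin.cons y₀ y : Fin (n + 1) → R) (fun _ => false) (Fin.cons b t) =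
      if b = true ∧ t = fun _ => false then ∏ j, weightB ρ x (y j) else 0 := by
  have htail : Fin.tail (fun _ : Fin (n + 1) => false) = fun _ => false := rfl
  simp only [transfer, Matrix.of_apply, rowWeight, Matrix.mul_apply, Fintype.sum_bool, htail,
    Fin.tail_cons, Fin.cons_zero, rowWeight_false_true_true]
  cases b <;> simp [vertex, h]

theorem transfer_cons_true (ρ x y₀ : R) {n : ℕ} (y : Fin n → R) (b : Bool) (s t : Fin n → Bool) :
    transfer ρ x (Fin.cons y₀ y : Fin (n + 1) → R) (Fin.cons true s) (Fin.cons b t) =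
      if b = true then weightB ρ x y₀ * transfer ρ x y s t else 0 := by
  simp only [transfer, Matrix.of_apply, rowWeight, Matrix.mul_apply, Fintype.sum_bool,
    Fin.tail_cons, Fin.cons_zero]
  cases b <;> simp [vertex]

theorem transferProd_cons_true (ρ y₀ : R) {m n : ℕ} (x : Fin m → R) (y : Fin n → R)
    (s t : Fin n → Bool) :
    transferProd ρ x (Fin.cons y₀ y : Fin (n + 1) → R) (Fin.cons true s) (Fin.cons true t) =
      (∏ i, weightB ρ (x i) y₀) * transferProd ρ x y s t := by
  induction m generalizing s with
  | zero => simp [transferProd_zero, Matrix.one_apply, Fin.cons_inj]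
  | succ m ih =>
    cases x using Fin.consCases with | _ x₀ x
    simp only [transferProd_cons, Matrix.mul_apply, sum_bool_cons, transfer_cons_true, ih,
      Fintype.sum_bool, Fin.prod_univ_succ, Fin.cons_zero, Fin.cons_succ, Finset.mul_sum,
      if_true, Bool.false_eq_true, if_false, zero_mul, Finset.sum_const_zero, add_zero]
    exact Finset.sum_congr rfl fun u _ => by ring

theorem partitionFn_cons_of_weightA_eq_zero {ρ x₀ y₀ : R} (h : weightA ρ x₀ y₀ = 0) {n : ℕ}
    (x y : Fin n → R) :
    partitionFn ρ (Fin.cons x₀ x : Fin (n + 1) → R) (Fin.cons y₀ y) =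
      (∏ j, weightB ρ x₀ (y j)) * (∏ i, weightB ρ (x i) y₀) * partitionFn ρ x y := by
  have htrue : (fun _ => true : Fin (n + 1) → Bool) = Fin.cons true fun _ => true :=
    ((cons_eq_const_iff _ _ _).2 ⟨rfl, rfl⟩).symm
  simp only [partitionFn, transferProd_cons, Matrix.mul_apply, sum_bool_cons, Fintype.sum_bool,
    transfer_false_of_weightA_eq_zero h, htrue]
  simp [transferProd_cons_true, mul_assoc]

end Recursion

section Degree

open Polynomial

/-- The column parameters `y`, preceded by an indeterminate one. -/
def freeColumn {n : ℕ} (y : Fin n → R) : Fin (n + 1) → R[X] := Fin.cons X (C ∘ y)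

theorem evalRingHom_comp_freeColumn (t : R) {n : ℕ} (y : Fin n → R) :
    evalRingHom t ∘ freeColumn y = Fin.cons t y := by
  ext j
  cases j using Fin.cases <;> simp [freeColumn]

theorem natDegree_mul_mul_X_pow_le {p q : R[X]} {a b c k l : ℕ}
    (hp : (p * X ^ b).natDegree ≤ k + a) (hq : (q * X ^ c).natDegree ≤ l + b) :
    (p * q * X ^ c).natDegree ≤ k + l + a := by
  nontriviality R
  by_cases h0 : p * q * X ^ c = 0
  · rw [h0, natDegree_zero]
    exact Nat.zero_le _
  · have h : (p * q * X ^ c * X ^ b).natDegree ≤ (k + a) + (l + b) := by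
      convert natDegree_mul_le_of_le hp hq using 2
      ring
    rw [natDegree_mul_X_pow _ h0] at h
    omega

theorem natDegree_vertex_mul_X_pow_le (ρ x : R) (s t g h : Bool) :
    (vertex (C ρ) (C x) X s t g h * X ^ t.toNat).natDegree ≤ 1 + s.toNat := by
  cases s <;> cases t <;> cases g <;> cases h <;>
    simp only [vertex, weightA, weightB, weightC, Matrix.diagonal_apply, Matrix.single_apply,
      reduceCtorEq, and_true, and_false, if_true, if_false, cond_true,
      cond_false, Bool.toNat_true, Bool.toNat_false, pow_zero, pow_one, mul_one, zero_mul] <;>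
    compute_degree!

theorem natDegree_transfer_mul_X_pow_le (ρ x : R) {n : ℕ} (y : Fin n → R)
    (s t : Fin (n + 1) → Bool) :
    (transfer (C ρ) (C x) (freeColumn y) s t * X ^ (t 0).toNat).natDegree ≤ 1 + (s 0).toNat := by
  have hrow : rowWeight (C ρ) (C x) (freeColumn y) s t =
      vertex (C ρ) (C x) X (s 0) (t 0) * (rowWeight ρ x y (Fin.tail s) (Fin.tail t)).map C := by
    rw [← rowWeight_map]
    rfl
  rw [transfer, Matrix.of_apply, hrow, Matrix.mul_apply, Finset.sum_mul]
  refine natDegree_sum_le_of_forall_le _ _ fun h _ => ?_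
  rw [Matrix.map_apply, mul_right_comm]
  exact (natDegree_mul_C_le _ _).trans (natDegree_vertex_mul_X_pow_le ..)

theorem natDegree_transferProd_mul_X_pow_le (ρ : R) {m n : ℕ} (x : Fin m → R) (y : Fin n → R)
    (s t : Fin (n + 1) → Bool) :
    (transferProd (C ρ) (C ∘ x) (freeColumn y) s t * X ^ (t 0).toNat).natDegree ≤
      m + (s 0).toNat := by
  induction m generalizing s with
  | zero =>
    rw [transferProd_zero, Matrix.one_apply]
    split_ifs with h
    · subst h
      rw [one_mul, zero_add]
      exact natDegree_X_pow_le _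
    · rw [zero_mul, natDegree_zero]
      exact Nat.zero_le _
  | succ m ih =>
    cases x using Fin.consCases with | _ x₀ x
    rw [Fin.comp_cons, transferProd_cons, Matrix.mul_apply, Finset.sum_mul, add_comm m]
    exact natDegree_sum_le_of_forall_le _ _ fun u _ =>
      natDegree_mul_mul_X_pow_le (natDegree_transfer_mul_X_pow_le ρ x₀ y s u) (ih x u)

theorem natDegree_partitionFn_le (ρ : R) {n : ℕ} (x : Fin (n + 1) → R) (y : Fin n → R) :
    (partitionFn (C ρ) (C ∘ x) (freeColumn y)).natDegree ≤ n := by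
  nontriviality R
  rcases eq_or_ne (partitionFn (C ρ) (C ∘ x) (freeColumn y)) 0 with h0 | h0
  · rw [h0, natDegree_zero]
    exact Nat.zero_le n
  · have h := natDegree_transferProd_mul_X_pow_le ρ x y (fun _ => false) fun _ => true
    rw [← partitionFn, natDegree_mul_X_pow _ h0] at h
    simpa using h

end Degree

/-! ### The Izergin–Korepin formula -/

section IzerginKorepin

open Polynomial

/-- The matrix with entries `1 / weightAB r (x i) (y j)`, each column being cleared of its
denominators. -/
def clearedMatrix (r : R) {n : ℕ} (x y : Fin n → R) : Matrix (Fin n) (Fin n) R :=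
  Matrix.of fun i j => ∏ k, if k = i then 1 else weightAB r (x k) (y j)

theorem clearedMatrix_apply (r : R) {n : ℕ} (x y : Fin n → R) (i j : Fin n) :
    clearedMatrix r x y i j = ∏ k, if k = i then 1 else weightAB r (x k) (y j) :=
  rfl

theorem clearedMatrix_map (f : R →+* S) (r : R) {n : ℕ} (x y : Fin n → R) :
    clearedMatrix (f r) (f ∘ x) (f ∘ y) = f.mapMatrix (clearedMatrix r x y) := by
  ext i j
  simp only [clearedMatrix_apply, RingHom.mapMatrix_apply, Matrix.map_apply, map_prod,
    apply_ite f, map_one, Function.comp_apply, weightAB_map]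

theorem clearedMatrix_comp_perm (r : R) {n : ℕ} (x y : Fin n → R) (σ : Equiv.Perm (Fin n)) :
    clearedMatrix r (x ∘ σ) y = (clearedMatrix r x y).submatrix σ id := by
  ext i j
  exact Fintype.prod_equiv σ _ _ fun k => by simp

theorem weightAB_mul_clearedMatrix (r : R) {n : ℕ} (x y : Fin n → R) (i j : Fin n) :
    weightAB r (x i) (y j) * clearedMatrix r x y i j = ∏ k, weightAB r (x k) (y j) := by
  rw [← Finset.mul_prod_erase _ _ (Finset.mem_univ i), clearedMatrix_apply,
    ← Finset.mul_prod_erase _ _ (Finset.mem_univ i), if_pos rfl, one_mul]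
  exact congrArg _ (Finset.prod_congr rfl fun k hk => if_neg (Finset.ne_of_mem_erase hk))

theorem det_clearedMatrix_eq_prod_mul_det (r : R) {n : ℕ} (x y : Fin n → R)
    {M : Matrix (Fin n) (Fin n) R} (hM : ∀ i j, weightAB r (x i) (y j) * M i j = 1) :
    (clearedMatrix r x y).det = (∏ j, ∏ i, weightAB r (x i) (y j)) * M.det := by
  rw [← Matrix.det_mul_row]
  congr 1
  ext i j
  rw [Matrix.of_apply, ← weightAB_mul_clearedMatrix r x y i j, mul_right_comm, hM, one_mul]

theorem det_clearedMatrix_cons_of_weightAB_eq_zero {r x₀ y₀ : R} (h : weightAB r x₀ y₀ = 0) {n : ℕ}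
    (x y : Fin n → R) :
    (clearedMatrix r (Fin.cons x₀ x : Fin (n + 1) → R) (Fin.cons y₀ y)).det =
      (∏ i, weightAB r (x i) y₀) * (∏ j, weightAB r x₀ (y j)) * (clearedMatrix r x y).det := by
  set M := clearedMatrix r (Fin.cons x₀ x : Fin (n + 1) → R) (Fin.cons y₀ y) with hM
  have hcorner : M 0 0 = ∏ i, weightAB r (x i) y₀ := by
    simp [hM, clearedMatrix_apply, Fin.prod_univ_succ]
  have hcolumn (i : Fin n) : M i.succ 0 = 0 := by
    simp [hM, clearedMatrix_apply, Fin.prod_univ_succ, h, (Fin.succ_ne_zero i).symm]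
  have hminor : M.submatrix Fin.succ Fin.succ =
      Matrix.of fun i j => weightAB r x₀ (y j) * clearedMatrix r x y i j := by
    ext i j
    simp [hM, clearedMatrix_apply, Fin.prod_univ_succ, (Fin.succ_ne_zero i).symm]
  simp [Matrix.det_succ_column_zero, Fin.sum_univ_succ, hcorner, hcolumn, hminor,
    Matrix.det_mul_row, mul_assoc]

theorem natDegree_det_clearedMatrix_le (r : R) {n : ℕ} (x : Fin (n + 1) → R) (y : Fin n → R) :
    (clearedMatrix (C r) (C ∘ x) (freeColumn y)).det.natDegree ≤ 2 * n := by
  have hfactor (k : Fin (n + 1)) : (weightAB (C r) (C (x k)) X).natDegree ≤ 2 := by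
    unfold weightAB
    compute_degree
  have hfree (i : Fin (n + 1)) :
      (clearedMatrix (C r) (C ∘ x) (freeColumn y) i 0).natDegree ≤ 2 * n := by
    rw [clearedMatrix_apply, Fin.prod_univ_succAbove _ i, if_pos rfl, one_mul]
    simp only [Fin.succAbove_ne, if_false]
    refine (natDegree_prod_le _ _).trans
      ((Finset.sum_le_card_nsmul _ _ 2 fun k _ => hfactor _).trans ?_)
    simp [mul_comm]
  have hconst (i : Fin (n + 1)) (j : Fin n) :
      clearedMatrix (C r) (C ∘ x) (freeColumn y) i j.succ =
        C (∏ k, if k = i then 1 else weightAB r (x k) (y j)) := by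
    simp only [clearedMatrix_apply, freeColumn, Fin.cons_succ, Function.comp_apply, weightAB_map,
      map_prod, apply_ite C, map_one]
  refine (natDegree_det_le (d := Fin.cons (2 * n) 0) fun i j => ?_).trans
    (by simp [Fin.sum_univ_succ])
  cases j using Fin.cases with
  | zero => exact hfree i
  | succ j => rw [hconst, natDegree_C]; exact Nat.zero_le _

/-- The difference of the two sides of the Izergin–Korepin formula, cleared of denominators. -/
def ikDefect (ρ : R) {n : ℕ} (x y : Fin n → R) : R :=
  partitionFn ρ x y * ((Matrix.vandermonde x).det * (Matrix.vandermonde y).det) -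
    (clearedMatrix (ρ ^ 2) x y).det

theorem vandermonde_comp (f : R →+* S) {n : ℕ} (z : Fin n → R) :
    Matrix.vandermonde (f ∘ z) = f.mapMatrix (Matrix.vandermonde z) := by
  ext i j
  simp [Matrix.vandermonde_apply]

theorem ikDefect_map (f : R →+* S) (ρ : R) {n : ℕ} (x y : Fin n → R) :
    ikDefect (f ρ) (f ∘ x) (f ∘ y) = f (ikDefect ρ x y) := by
  simp only [ikDefect, partitionFn_map, vandermonde_comp, ← map_pow, clearedMatrix_map, map_sub,
    map_mul, RingHom.map_det]

theorem ikDefect_comp_perm [IsDomain R] {ρ : R} {n : ℕ} {x : Fin n → R}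
    (hx : ∀ i j, rWeight ρ (x i) (x j) ≠ 0) (y : Fin n → R) (σ : Equiv.Perm (Fin n)) :
    ikDefect ρ (x ∘ σ) y = Equiv.Perm.sign σ * ikDefect ρ x y := by
  have hvandermonde : Matrix.vandermonde (x ∘ σ) = (Matrix.vandermonde x).submatrix σ id := rfl
  simp only [ikDefect, partitionFn_comp_perm hx, hvandermonde, clearedMatrix_comp_perm,
    Matrix.det_permute]
  ring

theorem weightA_mul_weightA_of_eq_zero {ρ x₀ y₀ : R} (h : weightA ρ x₀ y₀ = 0) (x y : R) :
    weightA ρ x y₀ * weightA ρ x₀ y = (x - x₀) * (y - y₀) := by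
  unfold weightA at *
  linear_combination (-(1 - ρ ^ 2) * (x - x₀) * (y - y₀) + (y - y₀) * (ρ - (1 - ρ ^ 2) * x₀) +
    (x - x₀) * (ρ - (1 - ρ ^ 2) * y₀) + (1 - (1 - ρ ^ 2) * (x₀ * y₀) + ρ * (x₀ + y₀))) * h

theorem ikDefect_cons_of_weightA_eq_zero {ρ x₀ y₀ : R} (h : weightA ρ x₀ y₀ = 0) {n : ℕ}
    (x y : Fin n → R) :
    ikDefect ρ (Fin.cons x₀ x : Fin (n + 1) → R) (Fin.cons y₀ y) =
      (∏ i, weightAB (ρ ^ 2) (x i) y₀) * (∏ j, weightAB (ρ ^ 2) x₀ (y j)) * ikDefect ρ x y := by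
  have hAB : weightAB (ρ ^ 2) x₀ y₀ = 0 := by rw [← weightA_mul_weightB, h, zero_mul]
  have hprod : (∏ i, weightA ρ (x i) y₀) * ∏ j, weightA ρ x₀ (y j) =
      (∏ i, (x i - x₀)) * ∏ j, (y j - y₀) := by
    simp only [← Finset.prod_mul_distrib, weightA_mul_weightA_of_eq_zero h]
  simp only [ikDefect, partitionFn_cons_of_weightA_eq_zero h, det_vandermonde_cons,
    det_clearedMatrix_cons_of_weightAB_eq_zero hAB, ← weightA_mul_weightB, Finset.prod_mul_distrib]
  linear_combination (-(∏ j, weightB ρ x₀ (y j)) * (∏ i, weightB ρ (x i) y₀) * partitionFn ρ x y *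
    ((Matrix.vandermonde x).det * (Matrix.vandermonde y).det)) * hprod

theorem ikDefect_cons_apply (ρ : R) {n : ℕ} (x : Fin (n + 1) → R) (y : Fin n → R) (j : Fin n) :
    ikDefect ρ x (Fin.cons (y j) y) = 0 := by
  have hdet : (clearedMatrix (ρ ^ 2) x (Fin.cons (y j) y)).det = 0 :=
    Matrix.det_zero_of_column_eq (Fin.succ_ne_zero j).symm fun k => by simp [clearedMatrix_apply]
  rw [ikDefect, hdet, det_vandermonde_cons, Finset.prod_eq_zero (Finset.mem_univ j) (sub_self _),
    zero_mul, mul_zero, mul_zero, sub_zero]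

theorem natDegree_ikDefect_le (ρ : R) {n : ℕ} (x : Fin (n + 1) → R) (y : Fin n → R) :
    (ikDefect (C ρ) (C ∘ x) (freeColumn y)).natDegree ≤ 2 * n := by
  have hrow : (Matrix.vandermonde (C ∘ x)).det = C (Matrix.vandermonde x).det := by
    rw [vandermonde_comp, ← RingHom.map_det]
  have hcolumn : (Matrix.vandermonde (freeColumn y)).det.natDegree ≤ n := by
    rw [freeColumn, det_vandermonde_cons, vandermonde_comp, ← RingHom.map_det]
    refine (natDegree_mul_C_le _ _).trans ((natDegree_prod_le _ _).trans ?_)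
    refine (Finset.sum_le_card_nsmul _ _ 1 fun j _ => ?_).trans (by simp)
    rw [Function.comp_apply]
    compute_degree
  refine (natDegree_sub_le _ _).trans (max_le ?_ ?_)
  · rw [hrow, two_mul]
    exact natDegree_mul_le_of_le (natDegree_partitionFn_le ..)
      ((natDegree_C_mul_le _ _).trans hcolumn)
  · rw [← C_pow]
    exact natDegree_det_clearedMatrix_le ..

theorem ikDefect_cons_eq_zero [IsDomain R] {ρ : R} {n : ℕ} {x z : Fin (n + 1) → R} {y : Fin n → R}
    (hx : ∀ i j, rWeight ρ (x i) (x j) ≠ 0) (hz : ∀ i, weightA ρ (x i) (z i) = 0)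
    (hzy : Function.Injective (Sum.elim z y))
    (ih : ∀ i : Fin (n + 1), ikDefect ρ (i.removeNth x) y = 0) (y₀ : R) :
    ikDefect ρ x (Fin.cons y₀ y) = 0 := by
  have heval (t : R) :
      (ikDefect (C ρ) (C ∘ x) (freeColumn y)).eval t = ikDefect ρ x (Fin.cons t y) := by
    have hC : evalRingHom t ∘ C ∘ x = x := by ext i; simp
    rw [← coe_evalRingHom, ← ikDefect_map, hC, evalRingHom_comp_freeColumn, coe_evalRingHom, eval_C]
  have hrow (i : Fin (n + 1)) : ikDefect ρ x (Fin.cons (z i) y) = 0 := by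
    have hcons : x ∘ i.cycleRange.symm = Fin.cons (x i) (i.removeNth x) := by
      rw [Equiv.comp_symm_eq, Fin.cons_comp_cycleRange, Fin.insertNth_self_removeNth]
    have hperm := ikDefect_comp_perm hx (Fin.cons (z i) y) i.cycleRange.symm
    rw [hcons, ikDefect_cons_of_weightA_eq_zero (hz i), ih i, mul_zero] at hperm
    simpa using hperm.symm
  have hzero : ikDefect (C ρ) (C ∘ x) (freeColumn y) = 0 := by
    refine eq_zero_of_natDegree_lt_card_of_eval_eq_zero _ hzy ?_ ?_
    · rintro (i | j)
      · rw [heval, Sum.elim_inl, hrow]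
      · rw [heval, Sum.elim_inr, ikDefect_cons_apply]
    · have hdegree := natDegree_ikDefect_le ρ x y
      simp only [Fintype.card_sum, Fintype.card_fin]
      omega
  rw [← heval, hzero, eval_zero]

theorem ikDefect_eq_zero_of_injective [IsDomain R] {ρ : R} {n : ℕ} {x z y : Fin n → R}
    (hx : ∀ i j, rWeight ρ (x i) (x j) ≠ 0) (hz : ∀ i, weightA ρ (x i) (z i) = 0)
    (hzy : Function.Injective (Sum.elim z y)) :
    ikDefect ρ x y = 0 := by
  induction n with
  | zero =>
    have hstate : (fun _ => false : Fin 0 → Bool) = fun _ => true := Subsingleton.elim _ _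
    simp [ikDefect, partitionFn, transferProd_zero, hstate]
  | succ n ih =>
    cases y using Fin.consCases with | _ y₀ y
    have hinj {m : ℕ} {f : Fin m → Fin (n + 1)} (hf : Function.Injective f) :
        Function.Injective (Sum.elim (z ∘ f) y) := by
      convert hzy.comp (hf.sumMap (Fin.succ_injective n)) using 1
      rw [Sum.elim_comp_map]
      rfl
    exact ikDefect_cons_eq_zero hx hz (hinj Function.injective_id)
      (fun i => ih (fun _ _ => hx _ _) (fun _ => hz _) (hinj i.succAbove_right_injective)) y₀

theorem ikDefect_eq_zero_of_ne_zero {K : Type*} [Field K] {ρ : K} {n : ℕ} {x y : Fin n → K}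
    (hr : ∀ i j, rWeight ρ (x i) (x j) ≠ 0) (hA : ∀ i j, weightA ρ (x i) (y j) ≠ 0)
    (hd : ∀ i, (1 - ρ ^ 2) * x i - ρ ≠ 0) (hx : Function.Injective x)
    (hy : Function.Injective y) : ikDefect ρ x y = 0 := by
  have hz (i : Fin n) : weightA ρ (x i) ((1 + ρ * x i) / ((1 - ρ ^ 2) * x i - ρ)) = 0 := by
    rw [weightA]
    field_simp [hd i]
    ring
  refine ikDefect_eq_zero_of_injective hr hz (Function.Injective.sumElim ?_ hy ?_)
  · refine fun i k hik => hx ?_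
    have h := weightA_mul_weightA_of_eq_zero (hz i) (x k)
      ((1 + ρ * x i) / ((1 - ρ ^ 2) * x i - ρ) + 1)
    have hk : weightA ρ (x k) ((1 + ρ * x i) / ((1 - ρ ^ 2) * x i - ρ)) = 0 := by
      simpa only [hik] using hz k
    rw [hk, zero_mul, add_sub_cancel_left, mul_one] at h
    exact (sub_eq_zero.1 h.symm).symm
  · exact fun i j hij => hA i j (hij ▸ hz i)

open MvPolynomial in
theorem ikDefect_X_eq_zero (n : ℕ) :
    ikDefect (X none : MvPolynomial (Option (Fin n ⊕ Fin n)) ℤ) (fun i => X (some (.inl i)))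
      (fun j => X (some (.inr j))) = 0 := by
  let U := MvPolynomial (Option (Fin n ⊕ Fin n)) ℤ
  let toField : U →+* FractionRing U := algebraMap U (FractionRing U)
  have hinj : Function.Injective toField := IsFractionRing.injective U (FractionRing U)
  let atOne : U →+* ℤ := eval₂Hom (RingHom.id ℤ) fun v => v.elim 1 fun _ => 0
  have atOne_none : atOne (X none) = 1 := eval₂Hom_X' ..
  have atOne_some (v) : atOne (X (some v)) = 0 := eval₂Hom_X' ..
  have hne {p : U} (hp : atOne p ≠ 0) : toField p ≠ 0 :=
    (map_ne_zero_iff toField hinj).2 fun h => hp (by rw [h, map_zero])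
  rw [← map_eq_zero_iff toField hinj, ← ikDefect_map]
  refine ikDefect_eq_zero_of_ne_zero (fun i j => ?_) (fun i j => ?_) (fun i => ?_)
    (hinj.comp <| X_injective.comp <| (Option.some_injective _).comp Sum.inl_injective)
    (hinj.comp <| X_injective.comp <| (Option.some_injective _).comp Sum.inr_injective)
  · have h := hne (p := rWeight (X none) (X (some (.inl i))) (X (some (.inl j)))) <| by
      simp [rWeight, map_ofNat atOne 2, atOne_none, atOne_some]
    simpa [rWeight, map_ofNat toField 2] using h
  · have h := hne (p := weightA (X none) (X (some (.inl i))) (X (some (.inr j)))) <| by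
      simp [weightA, atOne_none, atOne_some]
    simpa [weightA] using h
  · have h := hne (p := (1 - X none ^ 2) * X (some (.inl i)) - X none) <| by
      simp [atOne_none, atOne_some]
    simpa using h

theorem izergin_korepin (ρ : R) {n : ℕ} (x y : Fin n → R) :
    partitionFn ρ x y * ((Matrix.vandermonde x).det * (Matrix.vandermonde y).det) =
      (clearedMatrix (ρ ^ 2) x y).det := by
  have h := ikDefect_map (MvPolynomial.eval₂Hom (Int.castRingHom R)
    fun v : Option (Fin n ⊕ Fin n) => v.elim ρ (Sum.elim x y)) (MvPolynomial.X none)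
    (fun i => MvPolynomial.X (some (.inl i))) fun j => MvPolynomial.X (some (.inr j))
  rw [ikDefect_X_eq_zero, map_zero, ikDefect, sub_eq_zero] at h
  simpa [Function.comp_def] using h

end IzerginKorepin

/-! ### The homogeneous limit -/

section HomogeneousLimit

/-- The power series `1 / weightAB r x y` in the variables `x = X 0` and `y = X 1`. -/
def kernel (r : R) : MvPowerSeries (Fin 2) R :=
  MvPowerSeries.invOfUnit (weightAB (MvPowerSeries.C r) (MvPowerSeries.X 0) (MvPowerSeries.X 1)) 1

/-- The Taylor coefficient of `x ^ p * y ^ q` in `1 / weightAB r x y`. -/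
def kernelCoeff (r : R) (p q : ℕ) : R :=
  MvPowerSeries.coeff (biExponent p q) (kernel r)

theorem weightAB_mul_map_kernel (r : R) (φ : MvPowerSeries (Fin 2) R →+* S) :
    weightAB (φ (MvPowerSeries.C r)) (φ (MvPowerSeries.X 0)) (φ (MvPowerSeries.X 1)) *
      φ (kernel r) = 1 := by
  rw [weightAB_map, ← map_mul, kernel, MvPowerSeries.mul_invOfUnit, map_one]
  simp [weightAB]

theorem eq_kernel_of_weightAB_mul_eq_one {r : R} {F : MvPowerSeries (Fin 2) R}
    (h : weightAB (MvPowerSeries.C r) (MvPowerSeries.X 0) (MvPowerSeries.X 1) * F = 1) :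
    F = kernel r :=
  left_inv_eq_right_inv (mul_comm _ F ▸ h) (weightAB_mul_map_kernel r (.id _))

theorem kernelCoeff_map (f : R →+* S) (r : R) (p q : ℕ) :
    kernelCoeff (f r) p q = f (kernelCoeff r p q) := by
  have h := weightAB_mul_map_kernel r (MvPowerSeries.map f)
  rw [MvPowerSeries.map_C, MvPowerSeries.map_X, MvPowerSeries.map_X] at h
  rw [kernelCoeff, ← eq_kernel_of_weightAB_mul_eq_one h, MvPowerSeries.coeff_map, kernelCoeff]

theorem rescale_neg_one_kernel (r : R) :
    MvPowerSeries.rescale (fun _ => -1) (kernel r) = kernel r := by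
  have h := weightAB_mul_map_kernel r (MvPowerSeries.rescale fun _ => -1)
  rw [rescale_C, rescale_X, rescale_X] at h
  refine eq_kernel_of_weightAB_mul_eq_one (.trans (congrArg (· * _) ?_) h)
  simp only [weightAB, map_neg, map_one]
  ring

theorem kernelCoeff_eq_zero_of_odd [IsAddTorsionFree R] (r : R) {p q : ℕ} (h : Odd (p + q)) :
    kernelCoeff r p q = 0 := by
  have hsymm := congrArg (MvPowerSeries.coeff (biExponent p q)) (rescale_neg_one_kernel r)
  have hsign : (biExponent p q).prod (fun _ m => (-1 : R) ^ m) = -1 := by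
    rw [biExponent, Finsupp.prod_add_index' (fun _ => pow_zero _) (fun _ => pow_add _),
      Finsupp.prod_single_index (h := fun _ m => (-1 : R) ^ m) (pow_zero _),
      Finsupp.prod_single_index (h := fun _ m => (-1 : R) ^ m) (pow_zero _), ← pow_add,
      h.neg_one_pow]
  rw [MvPowerSeries.coeff_rescale, hsign, neg_one_mul] at hsymm
  exact neg_eq_self.1 hsymm

open PowerSeries

theorem weightAB_mul_alongLine_kernel (r α β : R) :
    weightAB (C r) (C α * X) (C β * X) * alongLine α β (kernel r) = 1 := by
  simpa only [alongLine_C, alongLine_X, Matrix.cons_val_zero, Matrix.cons_val_one] using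
    weightAB_mul_map_kernel r (alongLine α β)

theorem partitionFn_zero_eq_leadingMinor [IsDomain R] [Infinite R] (ρ : R) (n : ℕ) :
    partitionFn ρ (fun _ : Fin n => 0) (fun _ => 0) = leadingMinor (kernelCoeff (ρ ^ 2)) n := by
  let α : Fin n → R := fun i => Infinite.natEmbedding R i
  let z : Fin n → R⟦X⟧ := fun i => C (α i) * X
  have hz : (Matrix.vandermonde z).det ≠ 0 := by
    refine Matrix.det_vandermonde_ne_zero_iff.2 fun i j hij => ?_
    simpa [α, Fin.val_inj] using C_injective (mul_right_cancel₀ X_ne_zero hij)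
  obtain ⟨H, hH, hfactor⟩ := exists_alongLine_eq_vandermonde_mul_mul α α (kernel (ρ ^ 2))
  have hIK := izergin_korepin (C ρ) z z
  rw [det_clearedMatrix_eq_prod_mul_det _ _ _ (M := .of fun i j => alongLine (α i) (α j) _)
    fun i j => map_pow C ρ 2 ▸ weightAB_mul_alongLine_kernel (ρ ^ 2) (α i) (α j), hfactor,
    Matrix.det_mul, Matrix.det_mul, Matrix.det_transpose] at hIK
  have hcancel : partitionFn (C ρ) z z =
      (∏ j, ∏ i, weightAB (C ρ ^ 2) (z i) (z j)) * H.det := by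
    refine mul_right_cancel₀ (mul_ne_zero hz hz) (hIK.trans ?_)
    ring
  have hz0 : constantCoeff ∘ z = fun _ => 0 := by
    ext i
    simp [z]
  have hweight (i j : Fin n) : constantCoeff (weightAB (C ρ ^ 2) (z i) (z j)) = 1 := by
    simp [weightAB, z]
  calc partitionFn ρ (fun _ : Fin n => 0) (fun _ => 0)
      = constantCoeff (partitionFn (C ρ) z z) := by
        rw [← partitionFn_map, hz0, constantCoeff_C]
    _ = (constantCoeff.mapMatrix H).det := by
        simp only [hcancel, map_mul, map_prod, hweight, Finset.prod_const_one, one_mul,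
          RingHom.map_det]
    _ = leadingMinor (kernelCoeff (ρ ^ 2)) n := congrArg Matrix.det (Matrix.ext hH)

end HomogeneousLimit

/-! ### Six-vertex states and alternating sign matrices -/

section AlternatingSignMatrices

/-- Starting from the state `h`, adding the entries of `r` one at a time keeps the running total
in `{0, 1}` and ends at `k`. -/
def IsPath : {n : ℕ} → Bool → (Fin n → ℤ) → Bool → Prop
  | 0, h, _, k => h = k
  | _ + 1, h, r, k => ∃ g : Bool, h.toInt + r 0 = g.toInt ∧ IsPath g (Fin.tail r) k

theorem sum_Iic_succ {M : Type*} [AddCommMonoid M] {n : ℕ} (r : Fin (n + 1) → M) (j : Fin n) :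
    ∑ i ∈ Iic j.succ, r i = r 0 + ∑ i ∈ Iic j, Fin.tail r i := by
  have hIic : Iic j.succ = insert 0 ((Iic j).map (Fin.succEmb n)) := by
    ext i
    cases i using Fin.cases <;> simp
  rw [hIic, Finset.sum_insert (by simp), Finset.sum_map]
  rfl

theorem exists_toInt_eq {z : ℤ} : (∃ b : Bool, z = b.toInt) ↔ z = 0 ∨ z = 1 := by
  simp [Bool.exists_bool]

theorem isPath_iff {n : ℕ} (h : Bool) (r : Fin n → ℤ) (k : Bool) :
    IsPath h r k ↔ (∀ j, h.toInt + ∑ i ∈ Iic j, r i = 0 ∨ h.toInt + ∑ i ∈ Iic j, r i = 1) ∧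
      h.toInt + ∑ i, r i = k.toInt := by
  induction n generalizing h with
  | zero => cases h <;> cases k <;> simp [IsPath]
  | succ n ih =>
    have hIic : Iic (0 : Fin (n + 1)) = {0} := by
      ext i
      simp
    simp only [IsPath, ih, Fin.forall_fin_succ, sum_Iic_succ, hIic, Finset.sum_singleton,
      Fin.sum_univ_succ, ← add_assoc, ← exists_toInt_eq (z := h.toInt + r 0)]
    constructor
    · rintro ⟨g, hg, hpartial, htotal⟩
      rw [hg]
      exact ⟨⟨⟨g, rfl⟩, hpartial⟩, htotal⟩
    · rintro ⟨⟨⟨g, hg⟩, hpartial⟩, htotal⟩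
      rw [hg] at hpartial htotal
      exact ⟨g, hg, hpartial, htotal⟩

theorem IsPath.mem {n : ℕ} {h k : Bool} {r : Fin n → ℤ} (hr : IsPath h r k) (j : Fin n) :
    r j = -1 ∨ r j = 0 ∨ r j = 1 := by
  induction n generalizing h with
  | zero => exact j.elim0
  | succ n ih =>
    obtain ⟨g, hg, hr⟩ := hr
    cases j using Fin.cases with
    | zero => cases h <;> cases g <;> simp at hg <;> omega
    | succ j => exact ih hr j

/-- The row of matrix entries that leads from the vertical states `s` above to the vertical states
`t` below. -/
def increment {n : ℕ} (s t : Fin n → Bool) : Fin n → ℤ := fun j => (t j).toInt - (s j).toInt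

theorem toInt_injective : Function.Injective Bool.toInt := by
  decide

theorem increment_injective {n : ℕ} (s : Fin n → Bool) : Function.Injective (increment s) :=
  fun _ _ h => funext fun j => toInt_injective (sub_left_injective (congrFun h j))

/-- The factor contributed by a matrix entry to the `Q`-enumeration. -/
def entryWeight (Q : R) (e : ℤ) : R := if e = -1 then Q else 1

theorem vertex_zero (ρ : R) (s t g h : Bool) :
    vertex ρ 0 0 s t g h =
      if g.toInt + (t.toInt - s.toInt) = h.toInt then
        entryWeight (4 * ρ ^ 2) (t.toInt - s.toInt) else 0 := by
  cases s <;> cases t <;> cases g <;> cases h <;>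
    simp [vertex, weightA, weightB, weightC, entryWeight]

open scoped Classical in
theorem rowWeight_zero (ρ : R) {n : ℕ} (s t : Fin n → Bool) (h k : Bool) :
    rowWeight ρ 0 (fun _ => 0) s t h k =
      if IsPath h (increment s t) k then ∏ j, entryWeight (4 * ρ ^ 2) (increment s t j) else 0 := by
  induction n generalizing h with
  | zero => simp [rowWeight, IsPath, Matrix.one_apply]
  | succ n ih =>
    have hzero : (Fin.tail fun _ : Fin (n + 1) => (0 : R)) = fun _ => 0 := rfl
    have htail : Fin.tail (increment s t) = increment (Fin.tail s) (Fin.tail t) := rfl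
    have hhead : (t 0).toInt - (s 0).toInt = increment s t 0 := rfl
    have hsucc (j : Fin n) :
      increment s t j.succ = increment (Fin.tail s) (Fin.tail t) j := rfl
    simp only [rowWeight, Matrix.mul_apply, hzero, ih, vertex_zero, IsPath, htail, hhead, hsucc,
      Fin.prod_univ_succ]
    by_cases hg : ∃ g : Bool, h.toInt + increment s t 0 = g.toInt
    · obtain ⟨g, hg⟩ := hg
      cases g <;> simp [hg]
    · push Not at hg
      simp [hg]

/-- The matrices of height `k` whose rows are paths from `0` to `1` and whose columns are paths
from `s` to `t`. -/
def IsPathMatrix {k n : ℕ} (s t : Fin n → Bool) (B : Fin k → Fin n → ℤ) : Prop :=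
  (∀ i, IsPath false (B i) true) ∧ ∀ j, IsPath (s j) (fun i => B i j) (t j)

open scoped Classical in
/-- The finite set of all path matrices with given boundary. -/
def pathMatrices (k : ℕ) {n : ℕ} (s t : Fin n → Bool) : Finset (Fin k → Fin n → ℤ) :=
  (Fintype.piFinset fun _ => Fintype.piFinset fun _ => {-1, 0, 1}).filter (IsPathMatrix s t)

theorem mem_pathMatrices {k n : ℕ} {s t : Fin n → Bool} {B : Fin k → Fin n → ℤ} :
    B ∈ pathMatrices k s t ↔ IsPathMatrix s t B := by
  simp only [pathMatrices, mem_filter, Fintype.mem_piFinset, mem_insert, mem_singleton,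
    and_iff_right_iff_imp]
  exact fun h i j => (h.1 i).mem j

theorem isPathMatrix_cons {k n : ℕ} {s t u : Fin n → Bool} {B : Fin k → Fin n → ℤ} :
    IsPathMatrix s u (Fin.cons (increment s t) B : Fin (k + 1) → Fin n → ℤ) ↔
      IsPath false (increment s t) true ∧ IsPathMatrix t u B := by
  simp only [IsPathMatrix, Fin.forall_fin_succ, Fin.cons_zero, Fin.cons_succ, IsPath,
    increment, add_sub_cancel, toInt_injective.eq_iff, exists_eq_left', and_assoc]
  rfl

theorem IsPathMatrix.exists_head_eq_increment {k n : ℕ} {s u : Fin n → Bool}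
    {B : Fin (k + 1) → Fin n → ℤ} (hB : IsPathMatrix s u B) : ∃ t, B 0 = increment s t := by
  choose t ht _ using hB.2
  exact ⟨t, funext fun j => eq_sub_of_add_eq' (ht j)⟩

open scoped Classical in
theorem sum_pathMatrices_succ {M : Type*} [AddCommMonoid M] {k n : ℕ} (s u : Fin n → Bool)
    (f : (Fin (k + 1) → Fin n → ℤ) → M) :
    ∑ B ∈ pathMatrices (k + 1) s u, f B =
      ∑ t, if IsPath false (increment s t) true then
        ∑ B ∈ pathMatrices k t u, f (Fin.cons (increment s t) B) else 0 := by
  rw [← Finset.sum_filter, Finset.sum_sigma']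
  refine .symm <| Finset.sum_nbij (fun p : (_ : Fin n → Bool) × (Fin k → Fin n → ℤ) =>
    Fin.cons (increment s p.1) p.2) ?_ ?_ ?_ fun _ _ => rfl
  · rintro ⟨t, B⟩ hp
    simpa only [mem_sigma, mem_filter, mem_univ, true_and, mem_pathMatrices,
      isPathMatrix_cons] using hp
  · rintro ⟨t, B⟩ - ⟨t', B'⟩ - h
    obtain ⟨ht, rfl⟩ := Fin.cons_inj.1 h
    exact congrArg (Sigma.mk · B) (increment_injective s ht)
  · intro B hB
    rw [Finset.mem_coe, mem_pathMatrices] at hB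
    obtain ⟨t, ht⟩ := hB.exists_head_eq_increment
    rw [← Fin.cons_self_tail B, ht] at hB ⊢
    refine ⟨⟨t, Fin.tail B⟩, ?_, rfl⟩
    simpa only [mem_coe, mem_sigma, mem_filter, mem_univ, true_and, mem_pathMatrices] using
      isPathMatrix_cons.1 hB

theorem pathMatrices_zero {n : ℕ} (s u : Fin n → Bool) :
    pathMatrices 0 s u = if s = u then {Fin.elim0} else ∅ := by
  ext B
  rw [mem_pathMatrices]
  split_ifs with h <;> simp [IsPathMatrix, IsPath, ← funext_iff, h, Subsingleton.elim B Fin.elim0]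

theorem transferProd_zero_apply (ρ : R) {n : ℕ} (k : ℕ) (s u : Fin n → Bool) :
    transferProd ρ (fun _ : Fin k => 0) (fun _ => 0) s u =
      ∑ B ∈ pathMatrices k s u, ∏ i, ∏ j, entryWeight (4 * ρ ^ 2) (B i j) := by
  classical
  induction k generalizing s with
  | zero =>
    rw [transferProd_zero, pathMatrices_zero, Matrix.one_apply]
    split_ifs <;> simp
  | succ k ih =>
    have hcons : (fun _ : Fin (k + 1) => (0 : R)) = Fin.cons 0 fun _ => 0 :=
      ((cons_eq_const_iff _ _ _).2 ⟨rfl, rfl⟩).symm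
    simp only [hcons, transferProd_cons, Matrix.mul_apply, ih, transfer, Matrix.of_apply,
      rowWeight_zero, sum_pathMatrices_succ, Fin.prod_univ_succ, Fin.cons_zero, Fin.cons_succ,
      ite_mul, zero_mul, Finset.mul_sum, Finset.sum_ite_irrel, Finset.sum_const_zero]

theorem isPathMatrix_iff_isASM {n : ℕ} (A : Matrix (Fin n) (Fin n) ℤ) :
    IsPathMatrix (fun _ => false) (fun _ => true) A ↔ IsASM A := by
  constructor
  · intro h
    have hentries := fun i j => (h.1 i).mem j
    simp only [IsPathMatrix, isPath_iff, Bool.toInt_false, Bool.toInt_true, zero_add] at h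
    exact ⟨hentries, fun i => (h.1 i).2, fun j => (h.2 j).2, fun i => (h.1 i).1,
      fun i j => (h.2 j).1 i⟩
  · rintro ⟨-, hrow, hcol, hrow', hcol'⟩
    simp only [IsPathMatrix, isPath_iff, Bool.toInt_false, Bool.toInt_true, zero_add]
    exact ⟨fun i => ⟨hrow' i, hrow i⟩, fun j => ⟨fun i => hcol' i j, hcol j⟩⟩

theorem mem_asmFinset {n : ℕ} {A : Matrix (Fin n) (Fin n) ℤ} : A ∈ asmFinset n ↔ IsASM A := by
  simp only [asmFinset, mem_filter, mem_image, mem_univ, true_and, and_iff_right_iff_imp]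
  intro h
  refine ⟨Matrix.of fun i j => if A i j = -1 then 0 else if A i j = 0 then 1 else 2, ?_⟩
  ext i j
  rcases h.1 i j with e | e | e <;> simp [e]

theorem prod_entryWeight (Q : R) {n : ℕ} (A : Matrix (Fin n) (Fin n) ℤ) :
    ∏ i, ∏ j, entryWeight Q (A i j) = Q ^ asmMu A := by
  rw [asmMu, ← Fintype.prod_prod_type' (f := fun i j => entryWeight Q (A i j))]
  simp only [entryWeight, Finset.prod_ite, Finset.prod_const, one_pow, mul_one]

theorem partitionFn_zero_eq_asmEnum (ρ : R) (n : ℕ) :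
    partitionFn ρ (fun _ : Fin n => 0) (fun _ => 0) = asmEnum n (4 * ρ ^ 2) := by
  rw [partitionFn, transferProd_zero_apply, asmEnum]
  refine Finset.sum_equiv Matrix.of (fun A => ?_) fun A _ => prod_entryWeight _ A
  rw [mem_pathMatrices, mem_asmFinset, ← isPathMatrix_iff_isASM]
  rfl

end AlternatingSignMatrices

/-! ### The factorization -/

section Factorization

open Polynomial

theorem asmPoly_eq_leadingMinor (n : ℕ) :
    asmPoly n = leadingMinor (kernelCoeff (C (1 / 4 : ℚ) * X)) n := by
  let f : ℚ[X] →+* ℚ[X] := compRingHom (4 * X ^ 2)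
  have hf : Function.Injective f := by
    refine (injective_iff_map_eq_zero f).2 fun p hp => (comp_eq_zero_iff.1 hp).resolve_right ?_
    rintro ⟨-, h⟩
    simpa [coeff_ofNat_mul] using congrArg (coeff · 2) h
  have hr : f (C (1 / 4 : ℚ) * X) = X ^ 2 := by
    simp [f, ← mul_assoc, ← map_ofNat C 4, ← C_mul]
  apply hf
  calc f (asmPoly n) = asmEnum n (4 * X ^ 2) := by simp [f, asmPoly, asmEnum]
    _ = leadingMinor (kernelCoeff (X ^ 2)) n := by
      rw [← partitionFn_zero_eq_asmEnum, partitionFn_zero_eq_leadingMinor]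
    _ = f (leadingMinor (kernelCoeff (C (1 / 4 : ℚ) * X)) n) := by
      simp only [map_leadingMinor, ← kernelCoeff_map, hr]

/-- The minor of order `m` over the even (for `ε = 0`) or odd (for `ε = 1`) indices of the matrix
whose leading minors are the polynomials `asmPoly`. -/
def parityMinor (ε m : ℕ) : ℚ[X] :=
  leadingMinor (fun i j => kernelCoeff (C (1 / 4) * X) (2 * i + ε) (2 * j + ε)) m

theorem asmPoly_eq_parityMinor_mul (n : ℕ) :
    asmPoly n = parityMinor 0 ((n + 1) / 2) * parityMinor 1 (n / 2) := by
  rw [asmPoly_eq_leadingMinor,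
    leadingMinor_eq_mul_of_odd_eq_zero fun _ _ => kernelCoeff_eq_zero_of_odd _]
  rfl

/-- The factors of the polynomials `asmPoly`. The powers of `2` are chosen so that those of
consecutive factors multiply up to `1 / 2` and `1` alternately. -/
def asmFactor (m : ℕ) : ℚ[X] :=
  if Even m then C (2 ^ (m / 2)) * parityMinor 0 (m / 2)
  else C (2 ^ (m / 2 + 1))⁻¹ * parityMinor 1 (m / 2)

theorem asmFactor_two_mul (k : ℕ) : asmFactor (2 * k) = C (2 ^ k) * parityMinor 0 k := by
  rw [asmFactor, if_pos (even_two_mul k), Nat.mul_div_cancel_left k two_pos]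

theorem asmFactor_two_mul_add_one (k : ℕ) :
    asmFactor (2 * k + 1) = C (2 ^ (k + 1))⁻¹ * parityMinor 1 k := by
  rw [asmFactor, if_neg (Nat.not_even_two_mul_add_one k), Nat.mul_add_div two_pos,
    Nat.div_eq_of_lt one_lt_two, add_zero]

theorem C_two_pow_mul_C_inv (k : ℕ) : (C (2 ^ k) * C (2 ^ k)⁻¹ : ℚ[X]) = 1 := by
  rw [← C_mul, mul_inv_cancel₀ (by positivity), C_1]

theorem asmPoly_two_mul (n : ℕ) :
    asmPoly (2 * n) = 2 * asmFactor (2 * n) * asmFactor (2 * n + 1) := by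
  have htwo : (2 * C (2 ^ n) : ℚ[X]) = C (2 ^ (n + 1)) := by
    rw [pow_succ', C_mul, map_ofNat]
  have h₀ : (2 * n + 1) / 2 = n := by omega
  have h₁ : 2 * n / 2 = n := by omega
  rw [asmPoly_eq_parityMinor_mul, h₀, h₁, asmFactor_two_mul, asmFactor_two_mul_add_one,
    ← mul_assoc 2, htwo, mul_mul_mul_comm, C_two_pow_mul_C_inv, one_mul]

theorem asmPoly_two_mul_add_one (n : ℕ) :
    asmPoly (2 * n + 1) = asmFactor (2 * n + 1) * asmFactor (2 * n + 2) := by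
  have h₀ : (2 * n + 1 + 1) / 2 = n + 1 := by omega
  have h₁ : (2 * n + 1) / 2 = n := by omega
  rw [asmPoly_eq_parityMinor_mul, h₀, h₁, mul_comm (asmFactor _), ← mul_add_one 2 n,
    asmFactor_two_mul, asmFactor_two_mul_add_one, mul_mul_mul_comm, C_two_pow_mul_C_inv, one_mul]

end Factorization

end SixVertex

/-- there is a sequence of polynomials P_m(Q) ∈ ℚ[Q] such that for every
positive n: A_{2n}(Q) = 2·P_{2n}(Q)·P_{2n+1}(Q) and A_{2n+1}(Q) = P_{2n+1}(Q)·P_{2n+2}(Q). -/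
theorem statement9 :
    ∃ P : ℕ → Polynomial ℚ,
      ∀ n : ℕ, 1 ≤ n →
        asmPoly (2 * n) = 2 * P (2 * n) * P (2 * n + 1) ∧
        asmPoly (2 * n + 1) = P (2 * n + 1) * P (2 * n + 2) :=
  ⟨SixVertex.asmFactor, fun n _ =>
    ⟨SixVertex.asmPoly_two_mul n, SixVertex.asmPoly_two_mul_add_one n⟩⟩

end
end

section
/- For every positive integer n the following identity holds in ℚ[x]: d_{n,1}(x,−1) = det_{1≤i,j≤n}( binom(x+i+j−2, j−1)·(j−i+1) ) = (2⌊(n+1)/2⌋−1)!! · ∏_{i=1}^{⌊n/2⌋}(x+2i), where (2m−1)!! = 1·3·5⋯(2m−1) denotes the double factorial. (Here a_{j−i+1}(−1) = j−i+1 for all i,j.) -/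
/-!
With rows and columns numbered from `0`, the Chu–Vandermonde identity reads
`binom(x + i + j, j) = ∑ₖ binom(i, k) binom(x + j, j - k)`. The absorption identities
`(k + 1) binom(i, k + 1) = (i - k) binom(i, k)` and
`(j - k) binom(x + j, j - k) = (x + k + 1) binom(x + j, j - k - 1)` let one multiply this sum by
`j - i = (j - k) - (i - k)` at the cost of moving each index `k` by at most one. Hence the matrix
with entries `binom(x + i + j, j) (j - i + t)` equals `L T U`, where `L` and `U` are unitriangular
and `T` is tridiagonal, and its determinants satisfy the three-term recurrence
`D (n + 2) = t D (n + 1) + (n + 1) (x + n + 1) D n`. For `t = 1` the product formula solves it.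
-/

open Polynomial Finset

noncomputable section

/-- The polynomial binomial coefficient binom(y, m) = y(y-1)⋯(y-m+1)/m! over a field F. -/
noncomputable def binomP (F : Type*) [Field F] (y : Polynomial F) (m : ℕ) : Polynomial F :=
  Polynomial.C ((m.factorial : F))⁻¹ * ∏ t ∈ Finset.range m, (y - (t : Polynomial F))

/-- a_m(q) for a numeric value q in a field: a_m = ∑_{l=0}^{m-1}(-q)^l for m > 0, a_0 = 0,
a_m = -∑_{l=1}^{-m}(-q)^{-l} for m < 0. -/
noncomputable def aF (F : Type*) [Field F] (q : F) (m : ℤ) : F :=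
  if 0 < m then ∑ l ∈ Finset.range m.toNat, (-q) ^ l
  else -∑ l ∈ Finset.range (-m).toNat, (-q) ^ (-(l + 1 : ℤ))

/-- d_{n,k}(x,q) ∈ F[x] for a numeric value q:
the determinant of the matrix with (1-based) (i,j) entry binom(x+i+j-2, j-1)·a_{j-i+k}(q). -/
noncomputable def dF (F : Type*) [Field F] (n : ℕ) (k : ℤ) (q : F) : Polynomial F :=
  Matrix.det (Matrix.of fun i j : Fin n =>
    binomP F (Polynomial.X + ((i : ℕ) : Polynomial F) + ((j : ℕ) : Polynomial F)) (j : ℕ) *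
      Polynomial.C (aF F q ((j : ℤ) - (i : ℤ) + k)))

open scoped Nat

section Tridiagonal

variable {R : Type*} [CommRing R]

/-- The `n × n` tridiagonal matrix with diagonal `a`, superdiagonal `b` and subdiagonal `c`. The
entry `c k` sits in row `k + 1`, so that `b k` and `c k` are mirror images. -/
def tridiagonal (a b c : ℕ → R) (n : ℕ) : Matrix (Fin n) (Fin n) R :=
  Matrix.of fun i j =>
    (if (j : ℕ) = i then a i else 0) + (if (j : ℕ) = i + 1 then b i else 0) +
      (if (i : ℕ) = j + 1 then c j else 0)

lemma tridiagonal_apply_self (a b c : ℕ → R) {n : ℕ} (i : Fin n) :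
    tridiagonal a b c n i i = a i := by
  simp [tridiagonal]

lemma tridiagonal_apply_of_eq_succ (a b c : ℕ → R) {n : ℕ} {i j : Fin n}
    (h : (j : ℕ) = i + 1) : tridiagonal a b c n i j = b i := by
  simp [tridiagonal, h, add_assoc]

lemma tridiagonal_apply_of_succ_eq (a b c : ℕ → R) {n : ℕ} {i j : Fin n}
    (h : (i : ℕ) = j + 1) : tridiagonal a b c n i j = c j := by
  simp [tridiagonal, h, add_assoc]

lemma tridiagonal_apply_eq_zero (a b c : ℕ → R) {n : ℕ} {i j : Fin n}
    (h : (i : ℕ) + 1 < j ∨ (j : ℕ) + 1 < i) : tridiagonal a b c n i j = 0 := by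
  simp only [tridiagonal, Matrix.of_apply]
  grind

lemma det_of_forall_castSucc_last_eq_zero {n : ℕ} (A : Matrix (Fin (n + 1)) (Fin (n + 1)) R)
    (hA : ∀ i : Fin n, A i.castSucc (Fin.last n) = 0) :
    A.det = A (Fin.last n) (Fin.last n) * (A.submatrix Fin.castSucc Fin.castSucc).det := by
  rw [Matrix.det_succ_column A (Fin.last n), Fin.sum_univ_castSucc]
  simp [hA, Fin.succAbove_last, ← two_mul]

lemma det_tridiagonal_add_two (a b c : ℕ → R) (n : ℕ) :
    (tridiagonal a b c (n + 2)).det =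
      a (n + 1) * (tridiagonal a b c (n + 1)).det - b n * c n * (tridiagonal a b c n).det := by
  set T := tridiagonal a b c (n + 2)
  have last_row_left (j : Fin n) : T (Fin.last (n + 1)) j.castSucc.castSucc = 0 :=
    tridiagonal_apply_eq_zero a b c (Or.inr (by simp))
  have last_row_penultimate : T (Fin.last (n + 1)) (Fin.last n).castSucc = c n :=
    tridiagonal_apply_of_succ_eq a b c rfl
  have corner : T (Fin.last (n + 1)) (Fin.last (n + 1)) = a (n + 1) :=
    tridiagonal_apply_self a b c _
  have minor_last : T.submatrix Fin.castSucc Fin.castSucc = tridiagonal a b c (n + 1) := rfl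
  have det_minor_penultimate :
      (T.submatrix Fin.castSucc (Fin.last n).castSucc.succAbove).det =
        b n * (tridiagonal a b c n).det := by
    rw [det_of_forall_castSucc_last_eq_zero]
    · congr 1
      · exact tridiagonal_apply_of_eq_succ a b c (by simp)
      · congr 1
        ext i j
        simp [T, tridiagonal, Fin.succAbove_of_castSucc_lt, Fin.castSucc_lt_last]
    · exact fun i => tridiagonal_apply_eq_zero a b c (Or.inl (by simp))
  rw [Matrix.det_succ_row T (Fin.last (n + 1)), Fin.sum_univ_castSucc, Fin.sum_univ_castSucc]
  simp only [last_row_left, last_row_penultimate, corner, Fin.succAbove_last, minor_last,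
    det_minor_penultimate, mul_zero, zero_mul, sum_const_zero, zero_add, Fin.val_last,
    Fin.val_castSucc]
  rw [Odd.neg_one_pow ⟨n, by ring⟩, Even.neg_one_pow ⟨n + 1, rfl⟩]
  ring

lemma dotProduct_tridiagonal_mulVec (a b c f g : ℕ → R) {n : ℕ} (hf : f n = 0) (hg : g n = 0) :
    (fun k : Fin n => f k) ⬝ᵥ (tridiagonal a b c n).mulVec (fun k : Fin n => g k) =
      ∑ k ∈ range n, (a k * (f k * g k) + b k * (f k * g (k + 1)) + c k * (f (k + 1) * g k)) := by
  have diagonal : ∑ i ∈ range n, ∑ j ∈ range n, f i * ((if j = i then a i else 0) * g j) =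
      ∑ k ∈ range n, a k * (f k * g k) := by
    refine sum_congr rfl fun i hi => ?_
    simp [hi, mul_left_comm]
  have superdiagonal :
      ∑ i ∈ range n, ∑ j ∈ range n, f i * ((if j = i + 1 then b i else 0) * g j) =
        ∑ k ∈ range n, b k * (f k * g (k + 1)) := by
    refine sum_congr rfl fun i hi => ?_
    simp only [ite_mul, zero_mul, mul_ite, mul_zero, sum_ite_eq', mem_range]
    -- For `i = n - 1` the left-hand side is zero, and so is `g (i + 1)`.
    grind
  have subdiagonal :
      ∑ i ∈ range n, ∑ j ∈ range n, f i * ((if i = j + 1 then c j else 0) * g j) =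
        ∑ k ∈ range n, c k * (f (k + 1) * g k) := by
    rw [sum_comm]
    refine sum_congr rfl fun j hj => ?_
    simp only [ite_mul, zero_mul, mul_ite, mul_zero, sum_ite_eq', mem_range]
    grind
  rw [sum_add_distrib, sum_add_distrib, ← diagonal, ← superdiagonal, ← subdiagonal]
  simp only [dotProduct, Matrix.mulVec, tridiagonal, Matrix.of_apply, mul_sum, sum_range,
    ← sum_add_distrib, add_mul, mul_add]

end Tridiagonal

section ChooseTridiagonal

variable {R : Type*} [CommRing R]

/-- The tridiagonal factor of the matrix with entries `binom(x + i + j, j) (j - i + t)`. -/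
def chooseTridiagonal (x t : R) (n : ℕ) : Matrix (Fin n) (Fin n) R :=
  tridiagonal (fun _ => t) (fun k => x + k + 1) (fun k => -(k + 1)) n

lemma det_chooseTridiagonal_add_two (x t : R) (n : ℕ) :
    (chooseTridiagonal x t (n + 2)).det =
      t * (chooseTridiagonal x t (n + 1)).det +
        (n + 1) * (x + n + 1) * (chooseTridiagonal x t n).det := by
  rw [chooseTridiagonal, det_tridiagonal_add_two, chooseTridiagonal, chooseTridiagonal]
  ring

-- For `m = 0` the subtraction truncates, and `0‼ = 1` agrees with the convention `(-1)‼ = 1`.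
lemma doubleFactorial_two_mul_succ_sub_one (m : ℕ) :
    (2 * (m + 1) - 1)‼ = (2 * m + 1) * (2 * m - 1)‼ := by
  cases m with
  | zero => rfl
  | succ m => exact Nat.doubleFactorial_add_two (2 * m + 1)

lemma det_chooseTridiagonal_one_two_mul_and_two_mul_add_one (x : R) (m : ℕ) :
    (chooseTridiagonal x 1 (2 * m)).det =
        (2 * m - 1)‼ * ∏ i ∈ range m, (x + (2 * i + 2)) ∧
      (chooseTridiagonal x 1 (2 * m + 1)).det =
        (2 * (m + 1) - 1)‼ * ∏ i ∈ range m, (x + (2 * i + 2)) := by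
  induction m with
  | zero => simp [chooseTridiagonal, tridiagonal]
  | succ m ih =>
    obtain ⟨ih_even, ih_odd⟩ := ih
    have even : (chooseTridiagonal x 1 (2 * (m + 1))).det =
        (2 * (m + 1) - 1)‼ * ∏ i ∈ range (m + 1), (x + (2 * i + 2)) := by
      rw [mul_add_one, det_chooseTridiagonal_add_two, ih_even, ih_odd, ← mul_add_one,
        doubleFactorial_two_mul_succ_sub_one, prod_range_succ]
      push_cast
      ring
    refine ⟨even, ?_⟩
    rw [show 2 * (m + 1) + 1 = 2 * m + 1 + 2 by ring, det_chooseTridiagonal_add_two, ih_odd,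
      show 2 * m + 1 + 1 = 2 * (m + 1) by ring, even,
      doubleFactorial_two_mul_succ_sub_one (m + 1), prod_range_succ]
    push_cast
    ring

lemma det_chooseTridiagonal_one_eq_doubleFactorial_mul_prod (x : R) (n : ℕ) :
    (chooseTridiagonal x 1 n).det =
      (2 * ((n + 1) / 2) - 1)‼ * ∏ i ∈ range (n / 2), (x + (2 * i + 2)) := by
  obtain ⟨m, rfl | rfl⟩ := n.even_or_odd'
  · rw [show (2 * m + 1) / 2 = m by omega, show 2 * m / 2 = m by omega]
    exact (det_chooseTridiagonal_one_two_mul_and_two_mul_add_one x m).1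
  · rw [show (2 * m + 1 + 1) / 2 = m + 1 by omega, show (2 * m + 1) / 2 = m by omega]
    exact (det_chooseTridiagonal_one_two_mul_and_two_mul_add_one x m).2

end ChooseTridiagonal

section BinomialRing

variable {R : Type*} [CommRing R]

/-- The lower unitriangular Pascal matrix, with entries `binom(i, k)`. -/
def pascalMatrix (R : Type*) [CommRing R] (n : ℕ) : Matrix (Fin n) (Fin n) R :=
  Matrix.of fun i k => (Nat.choose i k : R)

lemma det_pascalMatrix (n : ℕ) : (pascalMatrix R n).det = 1 := by
  rw [Matrix.det_of_isLowerTriangular]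
  · simp [pascalMatrix]
  · intro i k h
    exact mod_cast congrArg (Nat.cast : ℕ → R) (Nat.choose_eq_zero_of_lt h)

variable [BinomialRing R]

lemma succ_mul_ringChoose_succ (y : R) (m : ℕ) :
    ((m : R) + 1) * Ring.choose y (m + 1) = (y - m) * Ring.choose y m := by
  have h := Ring.choose_smul_choose y m.le_succ
  simp only [Nat.choose_succ_self_right, Nat.succ_eq_add_one] at h
  simpa [mul_comm] using h

/-- The binomial coefficient `binom(x + j, j - k)`, taken to be zero when `j < k`, where the
truncated subtraction would give `1`. These are the entries of the upper triangular factor. -/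
def shiftedChoose (x : R) (k j : ℕ) : R :=
  if k ≤ j then Ring.choose (x + j) (j - k) else 0

lemma shiftedChoose_self (x : R) (k : ℕ) : shiftedChoose x k k = 1 := by
  simp [shiftedChoose]

lemma shiftedChoose_of_lt (x : R) {k j : ℕ} (h : j < k) : shiftedChoose x k j = 0 :=
  if_neg h.not_ge

lemma sub_mul_shiftedChoose (x : R) (k j : ℕ) :
    ((j : R) - k) * shiftedChoose x k j = (x + k + 1) * shiftedChoose x (k + 1) j := by
  rcases lt_trichotomy k j with h | rfl | h
  · obtain ⟨m, rfl⟩ := Nat.exists_eq_add_of_lt h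
    have e₁ : k + m + 1 - k = m + 1 := by omega
    have e₂ : k + m + 1 - (k + 1) = m := by omega
    have absorb := succ_mul_ringChoose_succ (x + (k + m + 1 : ℕ)) m
    simp only [shiftedChoose, e₁, e₂, if_pos h.le, if_pos (Nat.succ_le_of_lt h)]
    push_cast at absorb ⊢
    linear_combination absorb
  · simp [shiftedChoose_of_lt x k.lt_succ_self]
  · simp [shiftedChoose_of_lt x h, shiftedChoose_of_lt x (h.trans k.lt_succ_self)]

lemma sum_choose_mul_shiftedChoose (x : R) (i : ℕ) {j n : ℕ} (hj : j < n) :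
    ∑ k ∈ range n, (i.choose k : R) * shiftedChoose x k j = Ring.choose (x + i + j) j := by
  have vanish : ∀ k ∈ range n, k ∉ range (j + 1) → (i.choose k : R) * shiftedChoose x k j = 0 := by
    intro k _ hk
    rw [shiftedChoose_of_lt x (by simpa using hk), mul_zero]
  rw [← sum_subset (range_mono hj) vanish, add_right_comm, add_comm,
    Ring.add_choose_eq j (Commute.all _ _), Nat.sum_antidiagonal_eq_sum_range_succ_mk]
  refine sum_congr rfl fun k hk => ?_
  rw [Ring.choose_natCast, shiftedChoose, if_pos (mem_range_succ_iff.1 hk)]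

/-- The upper unitriangular matrix with entries `binom(x + j, j - k)`. -/
def shiftedPascalMatrix (x : R) (n : ℕ) : Matrix (Fin n) (Fin n) R :=
  Matrix.of fun k j => shiftedChoose x k j

lemma det_shiftedPascalMatrix (x : R) (n : ℕ) : (shiftedPascalMatrix x n).det = 1 := by
  rw [Matrix.det_of_isUpperTriangular]
  · simp [shiftedPascalMatrix, shiftedChoose_self]
  · exact fun k j h => shiftedChoose_of_lt x h

lemma of_ringChoose_mul_eq_pascalMatrix_mul_chooseTridiagonal_mul (x t : R) (n : ℕ) :
    (Matrix.of fun i j : Fin n =>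
        Ring.choose (x + (i : ℕ) + (j : ℕ)) j * ((j : ℕ) - (i : ℕ) + t)) =
      pascalMatrix R n * chooseTridiagonal x t n * shiftedPascalMatrix x n := by
  ext i j
  have absorb_left (k : ℕ) :
      ((k : R) + 1) * Nat.choose i (k + 1) = (i - k) * Nat.choose i k := by
    simpa only [Ring.choose_natCast] using succ_mul_ringChoose_succ (i : R) k
  have absorb_right (k : ℕ) := sub_mul_shiftedChoose x k j
  have choose_last : (Nat.choose i n : R) = 0 := by simp [Nat.choose_eq_zero_of_lt i.isLt]
  calc
    Ring.choose (x + (i : ℕ) + (j : ℕ)) j * ((j : ℕ) - (i : ℕ) + t)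
    _ = ∑ k ∈ range n, Nat.choose i k * shiftedChoose x k j * ((j : ℕ) - (i : ℕ) + t) := by
      rw [← sum_choose_mul_shiftedChoose x i j.isLt, sum_mul]
    _ = ∑ k ∈ range n, (t * (Nat.choose i k * shiftedChoose x k j) +
          (x + k + 1) * (Nat.choose i k * shiftedChoose x (k + 1) j) +
          -((k : R) + 1) * (Nat.choose i (k + 1) * shiftedChoose x k j)) := by
      refine sum_congr rfl fun k _ => ?_
      linear_combination
        (Nat.choose i k : R) * absorb_right k + shiftedChoose x k j * absorb_left k
    _ = _ := by
      rw [Matrix.mul_mul_apply]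
      exact (dotProduct_tridiagonal_mulVec _ _ _ (fun k => (Nat.choose i k : R))
        (fun k => shiftedChoose x k j) choose_last (shiftedChoose_of_lt x j.isLt)).symm

theorem det_of_ringChoose_mul (x t : R) (n : ℕ) :
    (Matrix.of fun i j : Fin n =>
        Ring.choose (x + (i : ℕ) + (j : ℕ)) j * ((j : ℕ) - (i : ℕ) + t)).det =
      (chooseTridiagonal x t n).det := by
  rw [of_ringChoose_mul_eq_pascalMatrix_mul_chooseTridiagonal_mul, Matrix.det_mul, Matrix.det_mul,
    det_pascalMatrix, det_shiftedPascalMatrix, one_mul, mul_one]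

end BinomialRing

section Field

variable {F : Type*} [Field F]

lemma aF_neg_one (m : ℤ) : aF F (-1) m = m := by
  unfold aF
  split_ifs with h
  · lift m to ℕ using h.le
    simp
  · obtain ⟨k, rfl⟩ := Int.exists_eq_neg_ofNat (not_lt.1 h)
    simp

lemma binomP_eq_ringChoose [CharZero F] (y : F[X]) (m : ℕ) : binomP F y m = Ring.choose y m := by
  have smeval_eq_prod : (descPochhammer ℤ m).smeval y = ∏ t ∈ range m, (y - (t : F[X])) := by
    rw [← descPochhammer_eval_eq_prod_range, ← descPochhammer_map (Int.castRingHom F[X]),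
      ← aeval_eq_smeval, aeval_def, eval_map]
    exact congrArg (eval₂ · y _) (RingHom.ext_int _ _)
  have hm : (m.factorial : F) ≠ 0 := mod_cast m.factorial_ne_zero
  rw [binomP, ← smeval_eq_prod, Ring.descPochhammer_eq_factorial_smul_choose, nsmul_eq_mul,
    ← mul_assoc, ← map_natCast C, ← C_mul, inv_mul_cancel₀ hm, C_1, one_mul]

theorem statement10_general (F : Type*) [Field F] [CharZero F] (n : ℕ) :
    dF F n 1 (-1) =
      Matrix.det (Matrix.of fun i j : Fin n =>
        binomP F (X + ((i : ℕ) : F[X]) + ((j : ℕ) : F[X])) (j : ℕ) *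
          C (((j : ℕ) : F) - ((i : ℕ) : F) + 1)) ∧
    dF F n 1 (-1) =
      C ((2 * ((n + 1) / 2) - 1)‼ : F) * ∏ i ∈ range (n / 2), (X + C (2 * (i : F) + 2)) := by
  have dF_eq : dF F n 1 (-1) =
      Matrix.det (Matrix.of fun i j : Fin n =>
        binomP F (X + ((i : ℕ) : F[X]) + ((j : ℕ) : F[X])) (j : ℕ) *
          C (((j : ℕ) : F) - ((i : ℕ) : F) + 1)) := by
    simp [dF, aF_neg_one]
  refine ⟨dF_eq, ?_⟩
  have det_eq :=
    (det_of_ringChoose_mul (X : F[X]) 1 n).trans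
      (det_chooseTridiagonal_one_eq_doubleFactorial_mul_prod X n)
  simpa [binomP_eq_ringChoose, dF_eq, map_ofNat C] using det_eq

end Field

/-- in ℚ[x],
d_{n,1}(x,-1) = det( binom(x+i+j-2, j-1)·(j-i+1) )
             = (2⌊(n+1)/2⌋-1)‼ · ∏_{i=1}^{⌊n/2⌋}(x+2i). -/
theorem statement10 (n : ℕ) (hn : 1 ≤ n) :
    dF ℚ n 1 (-1) =
      Matrix.det (Matrix.of fun i j : Fin n =>
        binomP ℚ (Polynomial.X + ((i : ℕ) : Polynomial ℚ) + ((j : ℕ) : Polynomial ℚ)) (j : ℕ) *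
          Polynomial.C (((j : ℕ) : ℚ) - ((i : ℕ) : ℚ) + 1)) ∧
    dF ℚ n 1 (-1) =
      Polynomial.C ((Nat.doubleFactorial (2 * ((n + 1) / 2) - 1) : ℚ)) *
        ∏ i ∈ Finset.range (n / 2), (Polynomial.X + Polynomial.C (2 * (i : ℚ) + 2)) := by
  exact statement10_general ℚ n

end
end
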